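/- arXiv:1512.03992 — 7 statements merged into one kernel-verified Lean document; each statement's English description precedes it below -/
import Mathlib

section
/- For every integrable random variable X and every t ≥ 0, one has 1_{τ > t} · E[X | G_t] = 1_{τ > t} · (Z_t)^{-1} · E[X 1_{τ > t} | F_t] almost surely, where the right-hand side is interpreted as 0 on the (almost surely negligible) set {τ > t} ∩ {Z_t = 0}. -/
/-!
Write `A = {t < τ}`. Since `τ > t` on `A`, every generator `{τ ≤ s}`, `s ≤ t`, of `G_t` over `F_t`
has empty trace on `A`, so `G_t` and `F_t` have the same trace on `A`. By the Doob–Dynkin lemma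
there is an `F_t`-measurable `U` with `1_A E[X | G_t] = U 1_A` (`exists_eqOn_of_comap_le`).
Conditioning this identity on `F_t`, the left side gives `E[X 1_A | F_t]` by the tower property and
the right side gives `U Z_t` by pulling out `U`. As `Z_t ≠ 0` almost surely on `A`
(`ae_condExp_indicator_ne_zero`), dividing by `Z_t` on `A` gives the claim. Integrability of
`U 1_A` comes for free from that of `E[X | G_t]`.
-/

open MeasureTheory ProbabilityTheory Filter Set
open scoped ENNReal

noncomputable section

/-- If the trace of `m₁` on `A` is contained in the trace of `m₂`, then every `m₁`-measurable real
function agrees on `A` with an `m₂`-measurable one. -/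
lemma exists_eqOn_of_comap_le {Ω : Type*} {m₁ m₂ : MeasurableSpace Ω} {A : Set Ω}
    (hle : m₁.comap ((↑) : A → Ω) ≤ m₂.comap ((↑) : A → Ω)) {f : Ω → ℝ} (hf : Measurable[m₁] f) :
    ∃ U : Ω → ℝ, Measurable[m₂] U ∧ EqOn f U A := by
  have hf' : Measurable[m₂.comap ((↑) : A → Ω)] (fun a : A => f a) := by
    intro s hs
    exact hle _ ⟨f ⁻¹' s, hf hs, rfl⟩
  obtain ⟨U, hU, h⟩ := hf'.exists_eq_measurable_comp
  exact ⟨U, hU, fun ω hω => congrFun h ⟨ω, hω⟩⟩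

/-- The set where `P(A | m) = 0` is `m`-measurable, so its intersection with `A` has probability
equal to the integral of `P(A | m)` over it, namely `0`. -/
lemma ae_condExp_indicator_ne_zero {Ω : Type*} {m m0 : MeasurableSpace Ω} {P : Measure Ω}
    [IsProbabilityMeasure P] (hm : m ≤ m0) {A : Set Ω} (hA : MeasurableSet A) :
    ∀ᵐ ω ∂P, ω ∈ A → (P[A.indicator (fun _ => (1 : ℝ)) | m]) ω ≠ 0 := by
  set Z := P[A.indicator (fun _ => (1 : ℝ)) | m] with hZ
  have hN : MeasurableSet[m] {ω | Z ω = 0} :=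
    stronglyMeasurable_condExp.measurable (measurableSet_singleton 0)
  have h := setIntegral_condExp hm ((integrable_const (1 : ℝ)).indicator hA : Integrable _ P) hN
  have h0 : ∫ ω in {ω | Z ω = 0}, Z ω ∂P = 0 :=
    setIntegral_eq_zero_of_forall_eq_zero fun ω hω => hω
  rw [← hZ, h0, setIntegral_indicator hA, setIntegral_const, smul_eq_mul, mul_one,
    eq_comm, measureReal_eq_zero_iff] at h
  have h' := measure_eq_zero_iff_ae_notMem.1 h
  filter_upwards [h'] with ω hω hωA hωZ using hω ⟨hωZ, hωA⟩

/-- The key lemma on progressive enlargement: on `{τ > t}`, the conditional expectation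
given `G_t` of an integrable `X` equals `(Z_t)⁻¹ E[X 1_{τ > t} | F_t]`
(with the convention `0⁻¹ = 0`, so the right-hand side vanishes on `{Z_t = 0}`). -/
theorem progressive_enlargement_key_lemma
    {Ω : Type*} {m0 : MeasurableSpace Ω} (P : Measure Ω) [IsProbabilityMeasure P]
    (F : Filtration ℝ m0) (τ : Ω → ℝ) (hτ_meas : Measurable τ) (hτ_pos : ∀ ω, 0 < τ ω)
    (Z : ℝ → Ω → ℝ)
    (hZ : ∀ t : ℝ, Z t =ᵐ[P] P[Set.indicator {ω | t < τ ω} (fun _ => (1 : ℝ)) | F t])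
    (G : ℝ → MeasurableSpace Ω)
    (hG : ∀ t : ℝ, G t = (F t : MeasurableSpace Ω) ⊔
      MeasurableSpace.generateFrom {A : Set Ω | ∃ s : ℝ, s ≤ t ∧ A = {ω | τ ω ≤ s}})
    (X : Ω → ℝ) (hX : Integrable X P) (t : ℝ) (ht : 0 ≤ t) :
    Set.indicator {ω | t < τ ω} (P[X | G t])
      =ᵐ[P] Set.indicator {ω | t < τ ω}
        (fun ω => (Z t ω)⁻¹ * (P[Set.indicator {ω' | t < τ ω'} X | F t]) ω) := by
  set A : Set Ω := {ω | t < τ ω} with hA_def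
  have hA : MeasurableSet A := measurableSet_lt measurable_const hτ_meas
  have hFG : (F t : MeasurableSpace Ω) ≤ G t := hG t ▸ le_sup_left
  have hGm : G t ≤ m0 := by
    rw [hG t]
    refine sup_le (F.le t) (MeasurableSpace.generateFrom_le ?_)
    rintro _ ⟨s, -, rfl⟩
    exact measurableSet_le hτ_meas measurable_const
  have hAG : MeasurableSet[G t] A := by
    have h : MeasurableSet[G t] {ω | τ ω ≤ t} := by
      rw [hG t]
      exact (le_sup_right : _ ≤ (F t : MeasurableSpace Ω) ⊔ _) _
        (MeasurableSpace.measurableSet_generateFrom ⟨t, le_rfl, rfl⟩)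
    convert h.compl using 1
    ext ω
    simp [hA_def]
  have htrace : (G t).comap ((↑) : A → Ω) ≤ (F t : MeasurableSpace Ω).comap ((↑) : A → Ω) := by
    rw [hG t, MeasurableSpace.comap_sup, MeasurableSpace.comap_generateFrom]
    refine sup_le le_rfl (MeasurableSpace.generateFrom_le ?_)
    rintro _ ⟨_, ⟨s, hs, rfl⟩, rfl⟩
    have hempty : ((↑) : A → Ω) ⁻¹' {ω | τ ω ≤ s} = ∅ := by
      ext ⟨ω, hω⟩
      simpa using hs.trans_lt hω
    rw [hempty]
    exact @MeasurableSet.empty _ ((F t : MeasurableSpace Ω).comap ((↑) : A → Ω))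
  obtain ⟨U, hU, hUA⟩ := exists_eqOn_of_comap_le htrace
    (stronglyMeasurable_condExp (f := X) (μ := P)).measurable
  have hUmul : A.indicator (P[X | G t]) = U * A.indicator (fun _ => (1 : ℝ)) := by
    ext ω
    by_cases hω : ω ∈ A
    · simp [hω, hUA hω]
    · simp [hω]
  have hUint : Integrable (U * A.indicator (fun _ => (1 : ℝ))) P :=
    hUmul ▸ integrable_condExp.indicator hA
  have hpull : P[A.indicator (P[X | G t]) | F t]
      =ᵐ[P] U * P[A.indicator (fun _ => (1 : ℝ)) | F t] := by
    rw [hUmul]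
    exact condExp_mul_of_stronglyMeasurable_left hU.stronglyMeasurable hUint
      ((integrable_const 1).indicator hA)
  have htower : P[A.indicator (P[X | G t]) | F t] =ᵐ[P] P[A.indicator X | F t] :=
    (condExp_congr_ae (condExp_indicator hX hAG).symm).trans (condExp_condExp_of_le hFG hGm)
  filter_upwards [hpull, htower, hZ t, ae_condExp_indicator_ne_zero (P := P) (F.le t) hA]
    with ω h1 h2 h3 h4
  by_cases hω : ω ∈ A
  · rw [indicator_of_mem hω, indicator_of_mem hω, hUA hω, ← h2, h1, h3, Pi.mul_apply]
    rw [← hA_def, mul_comm (U ω), inv_mul_cancel_left₀ (h4 hω)]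
  · simp [hω]
end
end

section
/- Assume the immersion property holds: for every bounded F_∞-measurable random variable ξ and all 0 ≤ s ≤ t, E[ E[ξ | F_t] | G_s ] = E[ξ | F_s] almost surely (i.e., every bounded F-martingale of the form t ↦ E[ξ | F_t] is a G-martingale). Then for every t ≥ 0, P(τ > t | F_t) = P(τ > t | F_∞) almost surely; consequently the Azéma supermartingale is decreasing: for all 0 ≤ s ≤ t, Z_t ≤ Z_s almost surely. -/
open MeasureTheory ProbabilityTheory Filter Set
open scoped ENNReal

noncomputable section

/-!
Fix `t ≥ 0` and put `A = {τ > t}`, an event of `G t`. For `B ∈ F u` with `u ≥ t`, immersion applied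
to the indicator of `B` gives `E[1_B | G t] = E[1_B | F t]`, and self-adjointness of conditional
expectation (`setIntegral_condExp_indicator_comm`) yields
`∫_B E[1_A | F t] = ∫_A E[1_B | F t] = ∫_A E[1_B | G t] = ∫_A 1_B = ∫_B 1_A`.
Such `B` form a π-system generating `F_∞`, so the identity extends to `F_∞`
(`setIntegral_eq_of_isPiSystem`) and characterises `E[1_A | F t]` as `E[1_A | F_∞]`.
The Azéma supermartingale is then a family of conditional expectations of the decreasing family
`1_{τ > t}` given the single σ-algebra `F_∞`, hence it is decreasing.
-/

/-- Conditional expectation is self-adjoint, tested on indicators: both sides equal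
`∫ P[1_A | m] * P[1_B | m]`. -/
theorem setIntegral_condExp_indicator_comm {Ω : Type*} {m m0 : MeasurableSpace Ω}
    (P : Measure Ω) [IsProbabilityMeasure P] (hm : m ≤ m0) {A B : Set Ω}
    (hA : MeasurableSet A) (hB : MeasurableSet B) :
    ∫ ω in B, (P[A.indicator (fun _ => (1 : ℝ)) | m]) ω ∂P
      = ∫ ω in A, (P[B.indicator (fun _ => (1 : ℝ)) | m]) ω ∂P := by
  have key : ∀ A B : Set Ω, MeasurableSet A → MeasurableSet B →
      ∫ ω in B, (P[A.indicator (fun _ => (1 : ℝ)) | m]) ω ∂P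
        = ∫ ω, (P[A.indicator (fun _ => (1 : ℝ)) | m]) ω *
            (P[B.indicator (fun _ => (1 : ℝ)) | m]) ω ∂P := by
    intro A B hA hB
    have hbdd : ∀ᵐ ω ∂P, ‖(P[A.indicator (fun _ => (1 : ℝ)) | m]) ω‖ ≤ (1 : ℝ) := by
      refine ae_bdd_abs_condExp_of_ae_bdd_abs (Eventually.of_forall fun ω => ?_)
      by_cases h : ω ∈ A <;> simp [h]
    have hpull := condExp_stronglyMeasurable_mul_of_bound hm
      (stronglyMeasurable_condExp (μ := P) (m := m) (f := A.indicator (fun _ => (1 : ℝ))))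
      ((integrable_const (1 : ℝ)).indicator hB) _ hbdd
    have hcongr := integral_congr_ae hpull
    rw [integral_condExp hm] at hcongr
    simp only [Pi.mul_apply] at hcongr
    rw [← hcongr, ← integral_indicator hB]
    congr 1
    ext ω
    by_cases h : ω ∈ B <;> simp [h]
  rw [key A B hA hB, key B A hB hA]
  simp only [mul_comm]

/-- Two integrable functions with the same integral over the whole space and over each member of a
generating π-system have the same integral over every set of the generated σ-algebra. -/
theorem setIntegral_eq_of_isPiSystem {Ω : Type*} {m m0 : MeasurableSpace Ω}
    (P : Measure Ω) (hm : m ≤ m0) {f g : Ω → ℝ} (hf : Integrable f P) (hg : Integrable g P)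
    {S : Set (Set Ω)} (hgen : m = MeasurableSpace.generateFrom S) (hpi : IsPiSystem S)
    (huniv : ∫ ω, f ω ∂P = ∫ ω, g ω ∂P)
    (hS : ∀ B ∈ S, ∫ ω in B, f ω ∂P = ∫ ω in B, g ω ∂P)
    (B : Set Ω) (hB : MeasurableSet[m] B) :
    ∫ ω in B, f ω ∂P = ∫ ω in B, g ω ∂P := by
  induction B, hB using MeasurableSpace.induction_on_inter hgen hpi with
  | empty => simp
  | basic B hB => exact hS B hB
  | compl B hB ih =>
    rw [setIntegral_compl (hm _ hB) hf, setIntegral_compl (hm _ hB) hg, huniv, ih]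
  | iUnion B hdisj hB ih =>
    rw [integral_iUnion (fun i => hm _ (hB i)) hdisj hf.integrableOn,
      integral_iUnion (fun i => hm _ (hB i)) hdisj hg.integrableOn]
    simp only [ih]

/-- Under the immersion property (every bounded `F`-martingale `t ↦ E[ξ | F_t]` is a
`G`-martingale), one has `P(τ > t | F_t) = P(τ > t | F_∞)` a.s. for every `t ≥ 0`,
and consequently the Azéma supermartingale is decreasing. -/
theorem immersion_implies_azema_decreasing
    {Ω : Type*} {m0 : MeasurableSpace Ω} (P : Measure Ω) [IsProbabilityMeasure P]
    (F : Filtration ℝ m0) (τ : Ω → ℝ) (hτ_meas : Measurable τ) (hτ_pos : ∀ ω, 0 < τ ω)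
    (Z : ℝ → Ω → ℝ)
    (hZ : ∀ t : ℝ, Z t =ᵐ[P] P[Set.indicator {ω | t < τ ω} (fun _ => (1 : ℝ)) | F t])
    (G : ℝ → MeasurableSpace Ω)
    (hG : ∀ t : ℝ, G t = (F t : MeasurableSpace Ω) ⊔
      MeasurableSpace.generateFrom {A : Set Ω | ∃ s : ℝ, s ≤ t ∧ A = {ω | τ ω ≤ s}})
    (himm : ∀ ξ : Ω → ℝ,
      Measurable[⨆ (u : ℝ) (_ : (0 : ℝ) ≤ u), (F u : MeasurableSpace Ω)] ξ →
      (∃ C : ℝ, ∀ ω, |ξ ω| ≤ C) →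
      ∀ s t : ℝ, 0 ≤ s → s ≤ t → P[P[ξ | F t] | G s] =ᵐ[P] P[ξ | F s]) :
    (∀ t : ℝ, 0 ≤ t →
      P[Set.indicator {ω | t < τ ω} (fun _ => (1 : ℝ)) | F t]
        =ᵐ[P] P[Set.indicator {ω | t < τ ω} (fun _ => (1 : ℝ)) |
            ⨆ (u : ℝ) (_ : (0 : ℝ) ≤ u), (F u : MeasurableSpace Ω)]) ∧
    (∀ s t : ℝ, 0 ≤ s → s ≤ t → Z t ≤ᵐ[P] Z s) := by
  have hA : ∀ t : ℝ, MeasurableSet {ω | t < τ ω} := fun t => measurableSet_lt measurable_const hτ_meas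
  have hint : ∀ t : ℝ, Integrable (Set.indicator {ω | t < τ ω} (fun _ => (1 : ℝ))) P :=
    fun t => (integrable_const (1 : ℝ)).indicator (hA t)
  have hF : (⨆ (u : ℝ) (_ : (0 : ℝ) ≤ u), (F u : MeasurableSpace Ω)) ≤ m0 :=
    iSup₂_le fun u _ => F.le u
  have hmain : ∀ t : ℝ, 0 ≤ t →
      P[Set.indicator {ω | t < τ ω} (fun _ => (1 : ℝ)) | F t]
        =ᵐ[P] P[Set.indicator {ω | t < τ ω} (fun _ => (1 : ℝ)) |
            ⨆ (u : ℝ) (_ : (0 : ℝ) ≤ u), (F u : MeasurableSpace Ω)] := by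
    intro t ht
    have hGle : G t ≤ m0 := by
      rw [hG]
      refine sup_le (F.le t) (MeasurableSpace.generateFrom_le ?_)
      rintro _ ⟨s, -, rfl⟩
      exact measurableSet_le hτ_meas measurable_const
    have hAG : MeasurableSet[G t] {ω | t < τ ω} := by
      have hle : MeasurableSet[G t] {ω | τ ω ≤ t} := by
        rw [hG]
        exact (le_sup_right : _ ≤ (F t : MeasurableSpace Ω) ⊔ _) _
          (MeasurableSpace.measurableSet_generateFrom ⟨t, le_rfl, rfl⟩)
      have hcompl : {ω | t < τ ω} = {ω | τ ω ≤ t}ᶜ := by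
        ext ω
        simp
      rw [hcompl]
      exact hle.compl
    -- Only indices `u ≥ t` are needed to generate `F_∞`, and immersion is usable for those.
    have hgen : (⨆ (u : ℝ) (_ : (0 : ℝ) ≤ u), (F u : MeasurableSpace Ω))
        = MeasurableSpace.generateFrom
          (⋃ u : ℝ, {B : Set Ω | MeasurableSet[F (max u t)] B}) := by
      rw [MeasurableSpace.generateFrom_iUnion_measurableSet (fun u : ℝ => F (max u t))]
      apply le_antisymm
      · exact iSup₂_le fun u _ => (F.mono (le_max_left u t)).trans
          (le_iSup (fun u : ℝ => (F (max u t) : MeasurableSpace Ω)) u)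
      · exact iSup_le fun u => le_iSup₂_of_le (max u t) (ht.trans (le_max_right u t)) le_rfl
    have hpi : IsPiSystem (⋃ u : ℝ, {B : Set Ω | MeasurableSet[F (max u t)] B}) :=
      isPiSystem_iUnion_of_monotone _
        (fun u => @MeasurableSpace.isPiSystem_measurableSet _ (F (max u t)))
        (fun u v huv => F.mono (max_le_max_right t huv))
    refine ae_eq_condExp_of_forall_setIntegral_eq hF (hint t)
      (fun _ _ _ => integrable_condExp.integrableOn) (fun B hB _ => ?_)
      (stronglyMeasurable_condExp.mono
        (le_iSup₂_of_le (f := fun (u : ℝ) (_ : (0 : ℝ) ≤ u) => (F u : MeasurableSpace Ω))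
          t ht le_rfl)).aestronglyMeasurable
    refine setIntegral_eq_of_isPiSystem P hF integrable_condExp (hint t) hgen hpi
      (integral_condExp (F.le t)) (fun B hB => ?_) B hB
    obtain ⟨u, hBu⟩ := Set.mem_iUnion.1 hB
    have hBu : MeasurableSet[F (max u t)] B := hBu
    have hB0 : MeasurableSet B := F.le _ _ hBu
    have hBint : Integrable (B.indicator (fun _ => (1 : ℝ))) P :=
      (integrable_const (1 : ℝ)).indicator hB0
    have hind : StronglyMeasurable[F (max u t)] (B.indicator (fun _ => (1 : ℝ))) :=
      stronglyMeasurable_const.indicator hBu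
    have hBG : P[B.indicator (fun _ => (1 : ℝ)) | G t]
        =ᵐ[P] P[B.indicator (fun _ => (1 : ℝ)) | F t] := by
      have h := himm (B.indicator (fun _ => (1 : ℝ)))
        (hind.measurable.mono
          (le_iSup₂_of_le (f := fun (u : ℝ) (_ : (0 : ℝ) ≤ u) => (F u : MeasurableSpace Ω))
            (max u t) (ht.trans (le_max_right u t)) le_rfl) le_rfl)
        ⟨1, fun ω => by by_cases hω : ω ∈ B <;> simp [hω]⟩ t (max u t) ht (le_max_right u t)
      rwa [condExp_of_stronglyMeasurable (F.le _) hind hBint] at h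
    rw [setIntegral_condExp_indicator_comm P (F.le t) (hA t) hB0,
      ← setIntegral_congr_ae (hA t) (hBG.mono fun ω h _ => h),
      setIntegral_condExp hGle hBint hAG, setIntegral_indicator hB0,
      setIntegral_indicator (hA t), Set.inter_comm]
  refine ⟨hmain, fun s t hs hst => ?_⟩
  have hmono := condExp_mono (m := ⨆ (u : ℝ) (_ : (0 : ℝ) ≤ u), (F u : MeasurableSpace Ω))
    (hint t) (hint s) (Eventually.of_forall (Set.indicator_le_indicator_of_subset
      (fun ω (h : t < τ ω) => lt_of_le_of_lt hst h) (fun _ => zero_le_one)))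
  filter_upwards [hZ t, hZ s, hmain t (hs.trans hst), hmain s hs, hmono] with ω h1 h2 h3 h4 h5
  rw [h1, h2, h3, h4]
  exact h5
end
end

section
/- Under the Cox construction, the filtration F is immersed in its progressive enlargement G: every F-martingale M (i.e., M is F-adapted, each M_t is integrable, and E[M_t | F_s] = M_s almost surely for all 0 ≤ s ≤ t) is also a G-martingale, i.e., E[M_t | G_s] = M_s almost surely for all 0 ≤ s ≤ t. -/
/-!
For `u ≥ 0`, right-continuity and monotonicity of `Λ` give `{τ ≤ u} = {Θ ≤ Λ u}`.
Hence `G s ≤ F s ⊔ σ(Θ)` (`generateFrom_tau_le`). For a martingale `M`, the increment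
`D = M t - M s` is `F_∞`-measurable and has zero integral over every set of `F s`; since `Θ` is
independent of `F_∞`, the integral of `D` over `A ∩ B` with `A ∈ F s`, `B ∈ σ(Θ)` factors as
`P B * ∫ ω in A, D ω ∂P = 0`. Such intersections form a π-system generating `F s ⊔ σ(Θ)`, so `D`
integrates to zero over every set of that σ-algebra (`setIntegral_sup_eq_zero`), in particular
over every set of `G s`.
-/

open MeasureTheory ProbabilityTheory Filter Set
open scoped ENNReal

noncomputable section

/-- The intersections `A ∩ B` with `A ∈ m₁`, `B ∈ m₂` generate `m₁ ⊔ m₂`. -/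
lemma sup_eq_generateFrom_inter {Ω : Type*} (m₁ m₂ : MeasurableSpace Ω) :
    m₁ ⊔ m₂ = MeasurableSpace.generateFrom
      {C : Set Ω | ∃ A B, MeasurableSet[m₁] A ∧ MeasurableSet[m₂] B ∧ C = A ∩ B} := by
  apply le_antisymm
  · refine sup_le (fun A hA => ?_) (fun B hB => ?_)
    · exact MeasurableSpace.measurableSet_generateFrom
        ⟨A, univ, hA, MeasurableSet.univ, (inter_univ A).symm⟩
    · exact MeasurableSpace.measurableSet_generateFrom
        ⟨univ, B, MeasurableSet.univ, hB, (univ_inter B).symm⟩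
  · refine MeasurableSpace.generateFrom_le ?_
    rintro C ⟨A, B, hA, hB, rfl⟩
    exact MeasurableSet.inter (le_sup_left (a := m₁) (b := m₂) A hA)
      (le_sup_right (a := m₁) (b := m₂) B hB)

lemma isPiSystem_inter {Ω : Type*} (m₁ m₂ : MeasurableSpace Ω) :
    IsPiSystem {C : Set Ω | ∃ A B, MeasurableSet[m₁] A ∧ MeasurableSet[m₂] B ∧ C = A ∩ B} := by
  rintro _ ⟨A, B, hA, hB, rfl⟩ _ ⟨A₂, B₂, hA₂, hB₂, rfl⟩ _
  exact ⟨A ∩ A₂, B ∩ B₂, hA.inter hA₂, hB.inter hB₂, inter_inter_inter_comm A B A₂ B₂⟩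

/-- If `D` is measurable for a σ-algebra `m₃` independent of `m₂` and integrates to zero over the
sets of `m₁ ≤ m₃`, then it integrates to zero over the sets of `m₁ ⊔ m₂`. -/
lemma setIntegral_sup_eq_zero {Ω : Type*} {m0 : MeasurableSpace Ω} (P : Measure Ω)
    [IsProbabilityMeasure P] {m₁ m₂ m₃ : MeasurableSpace Ω} (h1 : m₁ ≤ m₃) (h3 : m₃ ≤ m0)
    (h2 : m₂ ≤ m0) (hind : Indep m₃ m₂ P) {D : Ω → ℝ} (hD : Measurable[m₃] D)
    (hDi : Integrable D P)
    (h0 : ∀ A, MeasurableSet[m₁] A → ∫ ω in A, D ω ∂P = 0) :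
    ∀ C, MeasurableSet[m₁ ⊔ m₂] C → ∫ ω in C, D ω ∂P = 0 := by
  have hsup : m₁ ⊔ m₂ ≤ m0 := sup_le (h1.trans h3) h2
  have huniv : ∫ ω, D ω ∂P = 0 := by
    simpa using h0 univ MeasurableSet.univ
  refine MeasurableSpace.induction_on_inter (m := m₁ ⊔ m₂)
    (C := fun C _ => ∫ ω in C, D ω ∂P = 0)
    (sup_eq_generateFrom_inter m₁ m₂) (isPiSystem_inter m₁ m₂) (by simp) ?_ ?_ ?_
  · rintro _ ⟨A, B, hA, hB, rfl⟩
    have hA0 : MeasurableSet[m0] A := h3 A (h1 A hA)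
    have hce := condExp_indep_eq h3 h2
      ((hD.indicator (h1 A hA)).stronglyMeasurable) hind
    have hint : Integrable (A.indicator D) P := hDi.indicator hA0
    calc ∫ ω in A ∩ B, D ω ∂P = ∫ ω in B, A.indicator D ω ∂P := by
          rw [setIntegral_indicator hA0, inter_comm]
      _ = ∫ ω in B, (P[A.indicator D | m₂]) ω ∂P := (setIntegral_condExp h2 hint hB).symm
      _ = ∫ ω in B, (∫ x, A.indicator D x ∂P) ∂P :=
          setIntegral_congr_ae (h2 B hB) (hce.mono fun x hx _ => hx)
      _ = 0 := by rw [integral_indicator hA0, h0 A hA]; simp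
  · intro C hC hC0
    have := integral_add_compl (hsup C hC) hDi
    rw [hC0, huniv] at this
    simpa using this
  · intro f hdisj hf hf0
    rw [integral_iUnion (fun i => hsup _ (hf i)) hdisj hDi.integrableOn]
    simp [hf0]

/-- For `u ≥ 0`, the first time `lam` reaches `θ` is at most `u` exactly when `θ ≤ lam u`. -/
lemma sInf_le_iff_of_rightCont {lam : ℝ → ℝ} (hmono : Monotone lam)
    (hrc : ∀ t, ContinuousWithinAt lam (Ici t) t) (htop : Tendsto lam atTop atTop)
    (θ : ℝ) {u : ℝ} (hu : 0 ≤ u) :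
    sInf {t : ℝ | 0 ≤ t ∧ θ ≤ lam t} ≤ u ↔ θ ≤ lam u := by
  have hbdd : BddBelow {t : ℝ | 0 ≤ t ∧ θ ≤ lam t} := ⟨0, fun t ht => ht.1⟩
  constructor
  · intro h
    have hne : {t : ℝ | 0 ≤ t ∧ θ ≤ lam t}.Nonempty :=
      ((eventually_ge_atTop 0).and (htop.eventually_ge_atTop θ)).exists
    -- Every time after `u` has `lam ≥ θ`; right-continuity passes this to `u`.
    have hright : ∀ᶠ v in nhdsWithin u (Ioi u), θ ≤ lam v := by
      filter_upwards [self_mem_nhdsWithin] with v hv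
      obtain ⟨t, ht, htv⟩ := exists_lt_of_csInf_lt hne (lt_of_le_of_lt h hv)
      exact ht.2.trans (hmono htv.le)
    exact ge_of_tendsto ((hrc u).mono Ioi_subset_Ici_self) hright
  · intro h
    exact csInf_le hbdd ⟨hu, h⟩

/-- The information about `τ` up to time `s` is contained in `F s ⊔ σ(Θ)`. -/
lemma generateFrom_tau_le {Ω : Type*} {m0 : MeasurableSpace Ω} (F : Filtration ℝ m0)
    (Θ : Ω → ℝ) (Λ : ℝ → Ω → ℝ) (hΛ_adapted : ∀ t : ℝ, Measurable[F t] (Λ t))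
    (hΛ_mono : ∀ ω, Monotone fun t => Λ t ω)
    (hΛ_rc : ∀ ω, ∀ t : ℝ, ContinuousWithinAt (fun s => Λ s ω) (Set.Ici t) t)
    (hΛ_top : ∀ ω, Tendsto (fun t => Λ t ω) atTop atTop)
    (τ : Ω → ℝ) (hτ : ∀ ω, τ ω = sInf {t : ℝ | 0 ≤ t ∧ Θ ω ≤ Λ t ω}) (s : ℝ) :
    MeasurableSpace.generateFrom {A : Set Ω | ∃ u : ℝ, u ≤ s ∧ A = {ω | τ ω ≤ u}} ≤
      (F s : MeasurableSpace Ω) ⊔ MeasurableSpace.comap Θ inferInstance := by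
  refine MeasurableSpace.generateFrom_le ?_
  rintro _ ⟨u, hus, rfl⟩
  rcases lt_or_ge u 0 with hu | hu
  · have hempty : {ω | τ ω ≤ u} = ∅ := by
      ext ω
      have : 0 ≤ τ ω := by
        rw [hτ]
        exact Real.sInf_nonneg fun t ht => ht.1
      simp only [mem_ofPred_eq, mem_empty_iff_false, iff_false, not_le]
      linarith
    rw [hempty]
    exact MeasurableSpace.measurableSet_empty _
  · have heq : {ω | τ ω ≤ u} = {ω | Θ ω ≤ Λ u ω} := by
      ext ω
      simp only [mem_ofPred_eq, hτ]
      exact sInf_le_iff_of_rightCont (hΛ_mono ω) (hΛ_rc ω) (hΛ_top ω) (Θ ω) hu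
    rw [heq]
    have hΘ_sup : Measurable[(F s : MeasurableSpace Ω) ⊔ MeasurableSpace.comap Θ inferInstance] Θ :=
      (comap_measurable Θ).mono le_sup_right le_rfl
    have hΛ_sup : Measurable[(F s : MeasurableSpace Ω) ⊔ MeasurableSpace.comap Θ inferInstance]
        (Λ u) :=
      (hΛ_adapted u).mono ((F.mono hus).trans le_sup_left) le_rfl
    exact @measurableSet_le _ _ _ _ _ _ _ _ _ _ _ hΘ_sup hΛ_sup

/-- Under the Cox construction, the filtration `F` is immersed in its progressive
enlargement `G`: every `F`-martingale is a `G`-martingale. -/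
theorem cox_immersion
    {Ω : Type*} {m0 : MeasurableSpace Ω} (P : Measure Ω) [IsProbabilityMeasure P]
    (F : Filtration ℝ m0)
    (Θ : Ω → ℝ) (hΘ_meas : Measurable Θ)
    (hΘ_law : ∀ x : ℝ, 0 ≤ x → P {ω | x < Θ ω} = ENNReal.ofReal (Real.exp (-x)))
    (hΘ_indep : Indep (MeasurableSpace.comap Θ inferInstance)
      (⨆ (u : ℝ) (_ : (0 : ℝ) ≤ u), (F u : MeasurableSpace Ω)) P)
    (Λ : ℝ → Ω → ℝ)
    (hΛ_adapted : ∀ t : ℝ, Measurable[F t] (Λ t))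
    (hΛ_zero : ∀ ω, ∀ t : ℝ, t ≤ 0 → Λ t ω = 0)
    (hΛ_mono : ∀ ω, Monotone fun t => Λ t ω)
    (hΛ_rc : ∀ ω, ∀ t : ℝ, ContinuousWithinAt (fun s => Λ s ω) (Set.Ici t) t)
    (hΛ_top : ∀ ω, Tendsto (fun t => Λ t ω) atTop atTop)
    (τ : Ω → ℝ) (hτ : ∀ ω, τ ω = sInf {t : ℝ | 0 ≤ t ∧ Θ ω ≤ Λ t ω})
    (G : ℝ → MeasurableSpace Ω)
    (hG : ∀ t : ℝ, G t = (F t : MeasurableSpace Ω) ⊔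
      MeasurableSpace.generateFrom {A : Set Ω | ∃ s : ℝ, s ≤ t ∧ A = {ω | τ ω ≤ s}}) :
    ∀ M : ℝ → Ω → ℝ,
      (∀ t : ℝ, Measurable[F t] (M t)) →
      (∀ t : ℝ, Integrable (M t) P) →
      (∀ s t : ℝ, 0 ≤ s → s ≤ t → P[M t | F s] =ᵐ[P] M s) →
      ∀ s t : ℝ, 0 ≤ s → s ≤ t → P[M t | G s] =ᵐ[P] M s := by
  intro M hM hMi hMart s t hs hst
  have hΘ_le : MeasurableSpace.comap Θ inferInstance ≤ m0 := hΘ_meas.comap_le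
  have hF_le : ∀ u : ℝ, 0 ≤ u →
      (F u : MeasurableSpace Ω) ≤ ⨆ (u : ℝ) (_ : (0 : ℝ) ≤ u), (F u : MeasurableSpace Ω) :=
    fun u hu => le_iSup₂_of_le u hu le_rfl
  have hFinf : (⨆ (u : ℝ) (_ : (0 : ℝ) ≤ u), (F u : MeasurableSpace Ω)) ≤ m0 :=
    iSup₂_le fun u _ => F.le u
  have hGH : G s ≤ (F s : MeasurableSpace Ω) ⊔ MeasurableSpace.comap Θ inferInstance := by
    rw [hG]
    exact sup_le le_sup_left
      (generateFrom_tau_le F Θ Λ hΛ_adapted hΛ_mono hΛ_rc hΛ_top τ hτ s)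
  have hG0 : G s ≤ m0 := hGH.trans (sup_le (F.le s) hΘ_le)
  have hFG : (F s : MeasurableSpace Ω) ≤ G s := by
    rw [hG]
    exact le_sup_left
  have hD : Measurable[⨆ (u : ℝ) (_ : (0 : ℝ) ≤ u), (F u : MeasurableSpace Ω)]
      (fun ω => M t ω - M s ω) :=
    Measurable.sub ((hM t).mono (hF_le t (hs.trans hst)) le_rfl)
      ((hM s).mono (hF_le s hs) le_rfl)
  have hzero := setIntegral_sup_eq_zero P (hF_le s hs) hFinf hΘ_le hΘ_indep.symm hD
    ((hMi t).sub (hMi s)) (fun A hA => by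
      rw [integral_sub (hMi t).integrableOn (hMi s).integrableOn,
        ← setIntegral_condExp (F.le s) (hMi t) hA,
        setIntegral_congr_ae (F.le s A hA) ((hMart s t hs hst).mono fun x hx _ => hx), sub_self])
  refine (ae_eq_condExp_of_forall_setIntegral_eq hG0 (hMi t)
    (fun _ _ _ => (hMi s).integrableOn) (fun C hC _ => ?_)
    ((hM s).mono hFG le_rfl).stronglyMeasurable.aestronglyMeasurable).symm
  have hC0 := hzero C (hGH C hC)
  rw [integral_sub (hMi t).integrableOn (hMi s).integrableOn] at hC0
  linarith
end
end

section
/- Under the Cox construction with Λ having continuous paths, for every bounded F-progressively measurable process U : [0,∞) × Ω → ℝ, the process t ↦ U_τ · 1_{τ ≤ t} − ∫_0^{t ∧ τ} U_s dΛ_s is a uniformly integrable G-martingale, where U_τ(ω) := U(τ(ω), ω) and ∫_0^{t∧τ} U_s dΛ_s denotes, for each ω, the Lebesgue–Stieltjes integral of s ↦ U(s,ω) over (0, t ∧ τ(ω)] with respect to the measure induced by the nondecreasing continuous function s ↦ Λ_s(ω). -/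
/-!
The clock `Λ(ω)` is inverted pathwise. Let `T(x, ω) = inf {t ≥ 0 : x ≤ Λ_t(ω)}`
(`genInv`), so that `τ = T(Θ, ·)` and, for `t ≥ 0`, `T(x, ω) ≤ t ↔ x ≤ Λ_t(ω)`
(`genInv_le_iff`). Since `Λ` is continuous, `T` carries Lebesgue measure on `(0, Λ_a]` to
`dΛ` on `(0, a]` (`lsMeasure_restrict_eq_map`). With `H(x, ω) = U(T(x, ω), ω)` and `Θ > 0` the
process becomes

  `Y_t = 1_{Θ ≤ Λ_t} H(Θ) - ∫_0^{Λ_t ∧ Θ} H(x) dx`.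

Hence `Y_t - Y_s = k(Θ) - ∫_0^Θ k(x) dx` with `k = 1_{(Λ_s, Λ_t]} H`, which vanishes on
`{τ ≤ s}`. On `{s < τ}` every event of `G_s` coincides with one of `F_s` (`exists_trace_eq`), so
its indicator can be absorbed into `k`, keeping `k` measurable with respect to `F_∞`. It remains
to see that `k(Θ) - ∫_0^Θ k(x) dx` has mean zero. As `Θ` is independent of `F_∞`
(`indep_compensator`), this reduces to a deterministic bounded `k`, where it is Fubini's theorem
and `P(Θ ≥ x) = e^{-x}`, the tail of the unit exponential law being its own density
(`expLaw_compensator`).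

Since `Λ_τ = Θ⁺`, all `Y_t` are dominated by the integrable variable `C (1 + |Θ|)`, which gives
integrability and uniform integrability. Adaptedness (`measurable_compensator`) uses that the
rewritten integral up to `t ∧ τ` depends only on `T ∧ t`, on `U` up to time `t`, and on `t ∧ τ`.
-/

open MeasureTheory ProbabilityTheory Filter Set
open scoped ENNReal

noncomputable section

/-- The Lebesgue–Stieltjes measure induced by a nondecreasing continuous function. -/
def lsMeasure (f : ℝ → ℝ) (hmono : Monotone f) (hcont : Continuous f) : Measure ℝ :=
  StieltjesFunction.measure ⟨f, hmono, fun _ => hcont.continuousWithinAt⟩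

/-! ### The unit exponential law -/

lemma expLaw_eq (ν : Measure ℝ) [IsProbabilityMeasure ν]
    (hν : ∀ x : ℝ, 0 ≤ x → ν (Ioi x) = ENNReal.ofReal (Real.exp (-x))) :
    ν = (volume.restrict (Ioi 0)).withDensity (fun x => ENNReal.ofReal (Real.exp (-x))) := by
  set ρ : Measure ℝ :=
    (volume.restrict (Ioi 0)).withDensity (fun x => ENNReal.ofReal (Real.exp (-x))) with hρdef
  have hρ : ∀ x : ℝ, 0 ≤ x → ρ (Ioi x) = ENNReal.ofReal (Real.exp (-x)) := by
    intro x hx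
    rw [hρdef, withDensity_apply _ measurableSet_Ioi, Measure.restrict_restrict measurableSet_Ioi,
      Set.inter_eq_left.2 (Ioi_subset_Ioi hx), ← ofReal_integral_eq_lintegral_ofReal,
      integral_exp_neg_Ioi]
    · exact integrableOn_exp_neg_Ioi x
    · exact Eventually.of_forall fun y => (Real.exp_pos _).le
  have : IsProbabilityMeasure ρ := ⟨by
    have h := hρ 0 le_rfl
    rw [hρdef, withDensity_apply _ measurableSet_Ioi, Measure.restrict_restrict measurableSet_Ioi,
      Set.inter_self] at h
    rw [hρdef, withDensity_apply _ MeasurableSet.univ, Measure.restrict_univ, h]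
    simp⟩
  have key : ∀ (m : Measure ℝ) [IsProbabilityMeasure m]
      (_ : ∀ x : ℝ, 0 ≤ x → m (Ioi x) = ENNReal.ofReal (Real.exp (-x))) (a : ℝ),
      m (Iic a) = 1 - ENNReal.ofReal (Real.exp (-(max a 0))) := by
    intro m _ hm a
    rw [← hm _ (le_max_right a 0), ← compl_Ioi, prob_compl_eq_one_sub measurableSet_Ioi]
    congr 1
    rcases le_total 0 a with h | h
    · rw [max_eq_left h]
    · rw [max_eq_right h]
      refine le_antisymm ?_ (measure_mono (Ioi_subset_Ioi h))
      rw [hm 0 le_rfl]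
      simpa using prob_le_one
  exact Measure.ext_of_Iic _ _ fun a => by rw [key ν hν, key ρ hρ]

lemma integrable_id_expLaw (ν : Measure ℝ) [IsProbabilityMeasure ν]
    (hν : ∀ x : ℝ, 0 ≤ x → ν (Ioi x) = ENNReal.ofReal (Real.exp (-x))) :
    Integrable (fun x : ℝ => x) ν := by
  rw [expLaw_eq ν hν, integrable_withDensity_iff (by fun_prop) (by simp)]
  have h := Real.GammaIntegral_convergent (s := 2) (by norm_num)
  refine (h.congr ?_)
  filter_upwards [ae_restrict_mem measurableSet_Ioi] with x hx
  rw [ENNReal.toReal_ofReal (Real.exp_pos _).le, mul_comm]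
  norm_num

/-- The martingale identity for a single path: the unit exponential law has hazard rate one, so a
bounded function and its running integral have the same mean. -/
lemma expLaw_compensator (ν : Measure ℝ) [IsProbabilityMeasure ν]
    (hν : ∀ x : ℝ, 0 ≤ x → ν (Ioi x) = ENNReal.ofReal (Real.exp (-x)))
    (k : ℝ → ℝ) (hk : Measurable k) (C : ℝ) (hC : ∀ x, |k x| ≤ C) :
    ∫ θ, (∫ x in Ioc 0 θ, k x) ∂ν = ∫ θ, k θ ∂ν := by
  have hlaw := expLaw_eq ν hν
  have hIci : ∀ x : ℝ, 0 < x → ν.real (Ici x) = Real.exp (-x) := by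
    intro x hx
    have hna : ν {x} = 0 := by
      rw [hlaw]
      exact withDensity_absolutelyContinuous _ _ (by simp)
    rw [Measure.real, ← Ioi_union_left, measure_union (by simp) (measurableSet_singleton x), hna,
      add_zero, hν x hx.le, ENNReal.toReal_ofReal (Real.exp_pos _).le]
  have hexp : IntegrableOn (fun x => Real.exp (-x) * k x) (Ioi 0) := by
    refine Integrable.mono' (g := fun x => C * Real.exp (-x)) ?_ (by fun_prop) ?_
    · exact (by simpa using integrableOn_exp_neg_Ioi 0 :
        IntegrableOn (fun x => Real.exp (-x)) (Ioi 0)).const_mul C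
    · refine Eventually.of_forall fun x => ?_
      rw [norm_mul, Real.norm_eq_abs, Real.norm_eq_abs, abs_of_pos (Real.exp_pos _), mul_comm]
      exact mul_le_mul_of_nonneg_right (hC x) (Real.exp_pos _).le
  have hR : ∫ θ, k θ ∂ν = ∫ x in Ioi 0, Real.exp (-x) * k x := by
    rw [hlaw, integral_withDensity_eq_integral_toReal_smul (by fun_prop) (by simp)]
    simp [ENNReal.toReal_ofReal (Real.exp_pos _).le]
  set f : ℝ → ℝ → ℝ := fun θ x => (Iic θ).indicator k x with hf
  have hf' : ∀ θ x, f θ x = (Ici x).indicator (fun _ => k x) θ := by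
    intro θ x
    simp [hf, indicator]
  have hfm : Measurable (Function.uncurry f) := by
    have : Function.uncurry f = {p : ℝ × ℝ | p.2 ≤ p.1}.indicator fun p => k p.2 := by
      ext p
      simp [hf, Function.uncurry, indicator]
    rw [this]
    exact (hk.comp measurable_snd).indicator (measurableSet_le measurable_snd measurable_fst)
  have hint : Integrable (Function.uncurry f) (ν.prod (volume.restrict (Ioi 0))) := by
    rw [integrable_prod_iff' hfm.aestronglyMeasurable]
    refine ⟨Eventually.of_forall fun x => ?_, ?_⟩
    · simp only [Function.uncurry_apply_pair, hf']
      exact (integrable_const _).indicator measurableSet_Ici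
    · refine hexp.norm.congr ?_
      filter_upwards [ae_restrict_mem measurableSet_Ioi] with x hx
      simp only [Function.uncurry_apply_pair, hf', norm_indicator_eq_indicator_norm]
      rw [integral_indicator_const _ measurableSet_Ici, hIci x hx, norm_mul, smul_eq_mul,
        Real.norm_eq_abs (Real.exp _), abs_of_pos (Real.exp_pos _)]
  calc ∫ θ, (∫ x in Ioc 0 θ, k x) ∂ν
      = ∫ θ, (∫ x in Ioi 0, f θ x) ∂ν := by
        refine integral_congr_ae (Eventually.of_forall fun θ => ?_)
        simp only [hf]
        rw [setIntegral_indicator measurableSet_Iic, Ioi_inter_Iic]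
    _ = ∫ x in Ioi 0, (∫ θ, f θ x ∂ν) := integral_integral_swap hint
    _ = ∫ x in Ioi 0, Real.exp (-x) * k x := by
        refine setIntegral_congr_fun measurableSet_Ioi fun x hx => ?_
        simp only [hf']
        rw [integral_indicator_const _ measurableSet_Ici, hIci x hx, smul_eq_mul]
    _ = _ := hR.symm

lemma measurable_running_integral {E : Type*} [MeasurableSpace E] (k : ℝ × E → ℝ)
    (hk : Measurable k) :
    Measurable (fun p : ℝ × E => ∫ x in Ioc 0 p.1, k (x, p.2)) := by
  have h : ∀ p : ℝ × E, ∫ x in Ioc 0 p.1, k (x, p.2)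
      = ∫ x, (if 0 < x ∧ x ≤ p.1 then k (x, p.2) else 0) := by
    intro p
    rw [← integral_indicator measurableSet_Ioc]
    simp only [indicator, mem_Ioc]
  simp_rw [h]
  refine (StronglyMeasurable.integral_prod_right' (ν := volume)
    (f := fun q : (ℝ × E) × ℝ => if 0 < q.2 ∧ q.2 ≤ q.1.1 then k (q.2, q.1.2) else 0)
    (Measurable.stronglyMeasurable ?_)).measurable
  refine Measurable.ite ?_ (hk.comp (by fun_prop)) measurable_const
  exact (measurableSet_lt measurable_const measurable_snd).inter
    (measurableSet_le measurable_snd (by fun_prop))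

lemma abs_running_integral_le (k : ℝ → ℝ) (C : ℝ) (hC : ∀ x, |k x| ≤ C) (θ : ℝ) :
    |∫ x in Ioc 0 θ, k x| ≤ C * |θ| := by
  have h0 : 0 ≤ C := (abs_nonneg _).trans (hC 0)
  have h := norm_setIntegral_le_of_norm_le_const (μ := volume) (s := Ioc 0 θ) (f := k) (C := C)
    (by simp) (fun x _ => hC x)
  refine h.trans (mul_le_mul_of_nonneg_left ?_ h0)
  rw [Real.volume_real_Ioc]
  simp [le_abs_self]

/-- Averaging the pathwise identity over an independent random element. -/
lemma indep_compensator {Ω E : Type*} [MeasurableSpace Ω] [MeasurableSpace E] (P : Measure Ω)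
    [IsProbabilityMeasure P] (Θ : Ω → ℝ) (hΘ : Measurable Θ)
    (hlaw : ∀ x : ℝ, 0 ≤ x → P {ω | x < Θ ω} = ENNReal.ofReal (Real.exp (-x)))
    (X : Ω → E) (hX : Measurable X) (hind : IndepFun Θ X P)
    (k : ℝ × E → ℝ) (hk : Measurable k) (C : ℝ) (hC : ∀ p, |k p| ≤ C) :
    ∫ ω, (k (Θ ω, X ω) - ∫ x in Ioc 0 (Θ ω), k (x, X ω)) ∂P = 0 := by
  have : IsProbabilityMeasure (P.map Θ) := Measure.isProbabilityMeasure_map hΘ.aemeasurable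
  have : IsProbabilityMeasure (P.map X) := Measure.isProbabilityMeasure_map hX.aemeasurable
  have hν : ∀ x : ℝ, 0 ≤ x → (P.map Θ) (Ioi x) = ENNReal.ofReal (Real.exp (-x)) := by
    intro x hx
    rw [Measure.map_apply hΘ measurableSet_Ioi, ← hlaw x hx]
    rfl
  have hid := integrable_id_expLaw _ hν
  have hZm : Measurable fun p : ℝ × E => k p - ∫ x in Ioc 0 p.1, k (x, p.2) :=
    hk.sub (measurable_running_integral k hk)
  have hZb : ∀ p : ℝ × E, ‖k p - ∫ x in Ioc 0 p.1, k (x, p.2)‖ ≤ C + C * |p.1| := fun p =>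
    (abs_sub _ _).trans (add_le_add (hC p) (abs_running_integral_le _ C (fun x => hC (x, p.2)) _))
  have hZi : Integrable (fun p : ℝ × E => k p - ∫ x in Ioc 0 p.1, k (x, p.2))
      ((P.map Θ).prod (P.map X)) := by
    refine Integrable.mono' (g := fun p => C + C * |p.1|) ?_ hZm.aestronglyMeasurable
      (Eventually.of_forall hZb)
    exact (integrable_const C).add ((hid.abs.comp_fst _).const_mul C)
  have hmap := hind.map_prod_eq_prod_map_map hΘ.aemeasurable hX.aemeasurable
  rw [← integral_map (φ := fun ω => (Θ ω, X ω)) (by fun_prop)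
    (f := fun p : ℝ × E => k p - ∫ x in Ioc 0 p.1, k (x, p.2)) hZm.aestronglyMeasurable, hmap,
    integral_prod_symm _ hZi]
  refine integral_eq_zero_of_ae (Eventually.of_forall fun e => ?_)
  have hke : Measurable fun x => k (x, e) := hk.comp (by fun_prop)
  have hm2 : Measurable fun θ : ℝ => ∫ x in Ioc 0 θ, k (x, e) :=
    (measurable_running_integral k hk).comp (measurable_id.prodMk measurable_const)
  simp only [Pi.zero_apply]
  rw [integral_sub, expLaw_compensator _ hν _ hke C (fun x => hC _), sub_self]
  · exact Integrable.mono' (integrable_const C) hke.aestronglyMeasurable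
      (Eventually.of_forall fun x => hC _)
  · exact Integrable.mono' (hid.abs.const_mul C) hm2.aestronglyMeasurable
      (Eventually.of_forall fun θ => abs_running_integral_le _ C (fun x => hC _) _)

/-! ### The generalized inverse of the clock -/

/-- The left-continuous generalized inverse `x ↦ inf {t ≥ 0 : x ≤ f t}`. The set is nonempty when
`f` tends to infinity, which is the only case in which the definition is used. -/
def genInv (f : ℝ → ℝ) (x : ℝ) : ℝ := sInf {t : ℝ | 0 ≤ t ∧ x ≤ f t}

lemma genInv_nonneg (f : ℝ → ℝ) (x : ℝ) : 0 ≤ genInv f x :=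
  Real.sInf_nonneg fun _ ht => ht.1

/-- The Galois connection between `f` and its generalized inverse. -/
lemma genInv_le_iff {f : ℝ → ℝ} (hmono : Monotone f) (hcont : Continuous f)
    (htop : Tendsto f atTop atTop) (x b : ℝ) : genInv f x ≤ b ↔ 0 ≤ b ∧ x ≤ f b := by
  have hbdd : BddBelow {t : ℝ | 0 ≤ t ∧ x ≤ f t} := ⟨0, fun t ht => ht.1⟩
  have hne : {t : ℝ | 0 ≤ t ∧ x ≤ f t}.Nonempty := by
    obtain ⟨t, h0, hx⟩ := ((eventually_ge_atTop 0).and (htop.eventually_ge_atTop x)).exists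
    exact ⟨t, h0, hx⟩
  have hcl : IsClosed {t : ℝ | 0 ≤ t ∧ x ≤ f t} :=
    (isClosed_le continuous_const continuous_id).inter (isClosed_le continuous_const hcont)
  have hmem := hcl.csInf_mem hne hbdd
  exact ⟨fun h => ⟨hmem.1.trans h, hmem.2.trans (hmono h)⟩, fun h => csInf_le hbdd h⟩

lemma genInv_of_nonpos {f : ℝ → ℝ} (hmono : Monotone f) (hcont : Continuous f)
    (htop : Tendsto f atTop atTop) (h0 : f 0 = 0) {x : ℝ} (hx : x ≤ 0) : genInv f x = 0 :=
  le_antisymm ((genInv_le_iff hmono hcont htop x 0).2 ⟨le_rfl, by rwa [h0]⟩) (genInv_nonneg f x)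

lemma apply_genInv {f : ℝ → ℝ} (hmono : Monotone f) (hcont : Continuous f)
    (htop : Tendsto f atTop atTop) (h0 : f 0 = 0) {x : ℝ} (hx : 0 ≤ x) : f (genInv f x) = x := by
  refine le_antisymm ?_ ((genInv_le_iff hmono hcont htop x _).1 le_rfl).2
  by_contra! hlt
  obtain ⟨u, hu, hux⟩ := intermediate_value_Icc (genInv_nonneg f x) hcont.continuousOn
    (show x ∈ Icc (f 0) (f (genInv f x)) from ⟨by rwa [h0], hlt.le⟩)
  have h1 := (genInv_le_iff hmono hcont htop x u).2 ⟨hu.1, hux.ge⟩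
  have h2 := hmono h1
  simp only [hux] at h2
  exact absurd hlt (not_lt.2 h2)

lemma measurable_genInv {f : ℝ → ℝ} (hmono : Monotone f) (hcont : Continuous f)
    (htop : Tendsto f atTop atTop) : Measurable (genInv f) := by
  refine measurable_of_Iic fun b => ?_
  have : genInv f ⁻¹' Iic b = {x | 0 ≤ b ∧ x ≤ f b} := by
    ext x
    exact genInv_le_iff hmono hcont htop x b
  rw [this]
  exact (MeasurableSet.const _).inter measurableSet_Iic

/-- The generalized inverse transports Lebesgue measure to the Lebesgue–Stieltjes measure. -/
lemma lsMeasure_restrict_eq_map {f : ℝ → ℝ} (hmono : Monotone f) (hcont : Continuous f)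
    (htop : Tendsto f atTop atTop) (hzero : ∀ t ≤ 0, f t = 0) (a : ℝ) :
    (lsMeasure f hmono hcont).restrict (Ioc 0 a)
      = (volume.restrict (Ioc 0 (f a))).map (genInv f) := by
  have h0 : f 0 = 0 := hzero 0 le_rfl
  have hIoc : ∀ c, lsMeasure f hmono hcont (Ioc 0 c) = ENNReal.ofReal (f c) := by
    intro c
    rw [lsMeasure, StieltjesFunction.measure_Ioc]
    change ENNReal.ofReal (f c - f 0) = _
    rw [h0, sub_zero]
  have : IsFiniteMeasure ((lsMeasure f hmono hcont).restrict (Ioc 0 a)) :=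
    ⟨by rw [Measure.restrict_apply_univ, hIoc]; exact ENNReal.ofReal_lt_top⟩
  refine Measure.ext_of_Iic _ _ fun b => ?_
  rw [Measure.restrict_apply measurableSet_Iic, inter_comm, Ioc_inter_Iic, hIoc,
    Measure.map_apply (measurable_genInv hmono hcont htop) measurableSet_Iic,
    Measure.restrict_apply (measurable_genInv hmono hcont htop measurableSet_Iic)]
  have : genInv f ⁻¹' Iic b ∩ Ioc 0 (f a) = Ioc 0 (f (min a b)) := by
    ext x
    simp only [mem_inter_iff, mem_preimage, mem_Iic, genInv_le_iff hmono hcont htop, mem_Ioc,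
      hmono.map_min, le_min_iff]
    constructor
    · tauto
    · rintro ⟨hx, hxa, hxb⟩
      refine ⟨⟨?_, hxb⟩, hx, hxa⟩
      by_contra! hb
      rw [hzero b hb.le] at hxb
      linarith
  rw [this, Real.volume_Ioc, sub_zero]

lemma setIntegral_lsMeasure {f : ℝ → ℝ} (hmono : Monotone f) (hcont : Continuous f)
    (htop : Tendsto f atTop atTop) (hzero : ∀ t ≤ 0, f t = 0) (a : ℝ) (u : ℝ → ℝ) (hu : Measurable u) :
    ∫ s in Ioc 0 a, u s ∂(lsMeasure f hmono hcont) = ∫ x in Ioc 0 (f a), u (genInv f x) := by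
  rw [lsMeasure_restrict_eq_map hmono hcont htop hzero,
    integral_map (measurable_genInv hmono hcont htop).aemeasurable hu.aestronglyMeasurable]

/-! ### Measurability along a filtration -/

section Measurability

variable {Ω α : Type*} {m0 : MeasurableSpace Ω} [MeasurableSpace α] {F : Filtration ℝ m0}
  {U : ℝ → Ω → ℝ} {Λ : ℝ → Ω → ℝ}

/-- Evaluating a progressive process at a time bounded by `t` only uses the information `F t`: the
sample point `X` need only be measurable into `(Ω, F t)`. -/
lemma measurable_progressive_comp (hU : IsStronglyProgressive F U) (t : ℝ) {X : α → Ω}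
    (hX : @Measurable α Ω _ (F t) X) {ρ : α → ℝ} (hρ : Measurable ρ) (hρt : ∀ a, ρ a ≤ t) :
    Measurable fun a => U (ρ a) (X a) := by
  have h := (hU t).measurable
  have hg : @Measurable α (Iic t × Ω) _ (@Prod.instMeasurableSpace _ _ _ (F t))
      (fun a => ((⟨ρ a, hρt a⟩ : Iic t), X a)) :=
    Measurable.prodMk hρ.subtype_mk hX
  exact @Measurable.comp _ _ _ _ (@Prod.instMeasurableSpace _ _ _ (F t)) _ _ _ h hg

lemma measurable_progressive_comp_top (hU : IsStronglyProgressive F U) {X : α → Ω}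
    (hX : ∀ t, @Measurable α Ω _ (F t) X) {ρ : α → ℝ} (hρ : Measurable ρ) :
    Measurable fun a => U (ρ a) (X a) := by
  refine measurable_of_tendsto_metrizable (f := fun (n : ℕ) a => U (min (ρ a) n) (X a))
    (fun n => measurable_progressive_comp hU n (hX n) (hρ.min measurable_const)
      fun a => min_le_right _ _) ?_
  rw [tendsto_pi_nhds]
  intro a
  refine tendsto_const_nhds.congr' ?_
  obtain ⟨N, hN⟩ := exists_nat_ge (ρ a)
  filter_upwards [eventually_ge_atTop N] with n hn
  rw [min_eq_left (hN.trans (by exact_mod_cast hn))]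

lemma measurable_adapted_comp (hΛ_adapted : ∀ t : ℝ, Measurable[F t] (Λ t))
    {s t : ℝ} (hst : s ≤ t) {X : α → Ω}
    (hX : @Measurable α Ω _ (F t) X) : Measurable fun a => Λ s (X a) :=
  @Measurable.comp _ _ _ _ (F t) _ _ _ ((hΛ_adapted s).mono (F.mono hst) le_rfl) hX

lemma measurable_min_genInv
    (hΛ_adapted : ∀ t : ℝ, Measurable[F t] (Λ t))
    (hΛ_mono : ∀ ω, Monotone fun t => Λ t ω)
    (hΛ_cont : ∀ ω, Continuous fun t => Λ t ω)
    (hΛ_top : ∀ ω, Tendsto (fun t => Λ t ω) atTop atTop)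
    (t : ℝ) {X : α → Ω} (hX : @Measurable α Ω _ (F t) X) {ξ : α → ℝ}
    (hξ : Measurable ξ) : Measurable fun a => min (genInv (fun r => Λ r (X a)) (ξ a)) t := by
  refine measurable_of_Iic fun b => ?_
  rcases le_or_gt t b with h | h
  · convert MeasurableSet.univ
    ext a
    simp [h]
  · have : (fun a => min (genInv (fun r => Λ r (X a)) (ξ a)) t) ⁻¹' Iic b
        = {a | 0 ≤ b ∧ ξ a ≤ Λ b (X a)} := by
      ext a
      simp [h.not_ge, genInv_le_iff (hΛ_mono _) (hΛ_cont _) (hΛ_top _)]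
    rw [this]
    exact (MeasurableSet.const _).inter
      (measurableSet_le hξ (measurable_adapted_comp hΛ_adapted h.le hX))

lemma measurable_genInv_comp
    (hΛ_adapted : ∀ t : ℝ, Measurable[F t] (Λ t))
    (hΛ_mono : ∀ ω, Monotone fun t => Λ t ω)
    (hΛ_cont : ∀ ω, Continuous fun t => Λ t ω)
    (hΛ_top : ∀ ω, Tendsto (fun t => Λ t ω) atTop atTop)
    {X : α → Ω} (hX : ∀ t, @Measurable α Ω _ (F t) X) {ξ : α → ℝ}
    (hξ : Measurable ξ) : Measurable fun a => genInv (fun r => Λ r (X a)) (ξ a) := by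
  refine measurable_of_Iic fun b => ?_
  have : (fun a => genInv (fun r => Λ r (X a)) (ξ a)) ⁻¹' Iic b
      = {a | 0 ≤ b ∧ ξ a ≤ Λ b (X a)} := by
    ext a
    simp [genInv_le_iff (hΛ_mono _) (hΛ_cont _) (hΛ_top _)]
  rw [this]
  exact (MeasurableSet.const _).inter
    (measurableSet_le hξ (measurable_adapted_comp hΛ_adapted le_rfl (hX b)))

/-- After the change of variables, the integral up to a time `σ ≤ t` only involves the data
up to time `t`. -/
lemma measurable_compensator
    (hΛ_adapted : ∀ t : ℝ, Measurable[F t] (Λ t))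
    (hΛ_mono : ∀ ω, Monotone fun t => Λ t ω)
    (hΛ_cont : ∀ ω, Continuous fun t => Λ t ω)
    (hΛ_top : ∀ ω, Tendsto (fun t => Λ t ω) atTop atTop)
    (hU : IsStronglyProgressive F U) {t : ℝ} (ht : 0 ≤ t) {X : α → Ω}
    (hX : @Measurable α Ω _ (F t) X) {σ : α → ℝ} (hσ : Measurable σ) (hσ0 : ∀ a, 0 ≤ σ a)
    (hσt : ∀ a, σ a ≤ t) :
    Measurable fun a => ∫ x in Ioc 0 (Λ (σ a) (X a)), U (genInv (fun r => Λ r (X a)) x) (X a) := by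
  have h : ∀ a, ∫ x in Ioc 0 (Λ (σ a) (X a)), U (genInv (fun r => Λ r (X a)) x) (X a)
      = ∫ x, if (0 < x ∧ x ≤ Λ t (X a)) ∧ min (genInv (fun r => Λ r (X a)) x) t ≤ σ a then
          U (min (genInv (fun r => Λ r (X a)) x) t) (X a) else 0 := by
    intro a
    rw [← integral_indicator measurableSet_Ioc]
    congr 1
    ext x
    have hgal := fun b => genInv_le_iff (hΛ_mono (X a)) (hΛ_cont (X a)) (hΛ_top (X a)) x b
    by_cases hx : x ≤ Λ t (X a)
    · have hle := (hgal t).2 ⟨ht, hx⟩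
      have hiff := hgal (σ a)
      simp only [indicator, mem_Ioc, hx, min_eq_left hle, hiff, hσ0 a, true_and, and_true]
    · have : ¬ x ≤ Λ (σ a) (X a) := fun h => hx (h.trans (hΛ_mono _ (hσt a)))
      simp [indicator, hx, this]
  simp_rw [h]
  have hX' : @Measurable (α × ℝ) Ω _ (F t) (fun q => X q.1) :=
    @Measurable.comp _ _ _ _ _ (F t) _ _ hX measurable_fst
  have hmin := measurable_min_genInv hΛ_adapted hΛ_mono hΛ_cont hΛ_top t hX' measurable_snd
  refine (StronglyMeasurable.integral_prod_right' (ν := volume)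
    (f := fun q : α × ℝ => if (0 < q.2 ∧ q.2 ≤ Λ t (X q.1)) ∧
        min (genInv (fun r => Λ r (X q.1)) q.2) t ≤ σ q.1 then
          U (min (genInv (fun r => Λ r (X q.1)) q.2) t) (X q.1) else 0)
    (Measurable.stronglyMeasurable ?_)).measurable
  refine Measurable.ite ?_ (measurable_progressive_comp hU t hX' hmin fun a => min_le_right _ _)
    measurable_const
  exact ((measurableSet_lt measurable_const measurable_snd).inter
    (measurableSet_le measurable_snd (measurable_adapted_comp hΛ_adapted le_rfl hX'))).inter
    (measurableSet_le hmin (hσ.comp measurable_fst))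

end Measurability

/-! ### Uniform integrability and the enlarged filtration -/

lemma measurable_min_of_Iic {α : Type*} [MeasurableSpace α] {τ : α → ℝ} {t : ℝ}
    (h : ∀ b ≤ t, MeasurableSet {a | τ a ≤ b}) : Measurable fun a => min t (τ a) := by
  refine measurable_of_Iic fun b => ?_
  rcases le_or_gt t b with hb | hb
  · convert MeasurableSet.univ
    ext a
    simp [hb]
  · convert h b hb.le using 1
    ext a
    simp [hb.not_ge]

lemma uniformIntegrable_of_dominated {Ω ι : Type*} [MeasurableSpace Ω] {P : Measure Ω}
    {Y : ι → Ω → ℝ} {g : Ω → ℝ} (hg : Integrable g P) (hY : ∀ i, AEStronglyMeasurable (Y i) P)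
    (hb : ∀ i ω, |Y i ω| ≤ g ω) : UniformIntegrable Y 1 P := by
  have hg1 : MemLp g 1 P := memLp_one_iff_integrable.2 hg
  have hb' : ∀ i ω, ‖Y i ω‖ ≤ ‖g ω‖ := fun i ω => (hb i ω).trans (le_abs_self _)
  refine ⟨hY, fun ε hε => ?_, (eLpNorm g 1 P).toNNReal, fun i => ?_⟩
  · obtain ⟨δ, hδ, h⟩ := unifIntegrable_const (ι := Unit) le_rfl ENNReal.one_ne_top hg1 hε
    refine ⟨δ, hδ, fun i s hs hPs => (eLpNorm_mono fun ω => ?_).trans (h () s hs hPs)⟩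
    rw [norm_indicator_eq_indicator_norm, norm_indicator_eq_indicator_norm]
    exact indicator_le_indicator (hb' i ω)
  · rw [ENNReal.coe_toNNReal hg1.eLpNorm_ne_top]
    exact eLpNorm_mono (hb' i)

/-- Before `τ`, the enlarged σ-algebra has no more events than the reference one. -/
lemma exists_trace_eq {Ω : Type*} (m : MeasurableSpace Ω) (τ : Ω → ℝ) (s : ℝ) {A : Set Ω}
    (hA : MeasurableSet[m ⊔ MeasurableSpace.generateFrom
      {A : Set Ω | ∃ r : ℝ, r ≤ s ∧ A = {ω | τ ω ≤ r}}] A) :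
    ∃ B, MeasurableSet[m] B ∧ ∀ ω, s < τ ω → (ω ∈ A ↔ ω ∈ B) := by
  let v : {ω // s < τ ω} → Ω := Subtype.val
  have hle : MeasurableSpace.comap v (m ⊔ MeasurableSpace.generateFrom
      {A : Set Ω | ∃ r : ℝ, r ≤ s ∧ A = {ω | τ ω ≤ r}}) ≤ MeasurableSpace.comap v m := by
    rw [MeasurableSpace.comap_sup, sup_le_iff]
    refine ⟨le_rfl, ?_⟩
    rw [MeasurableSpace.comap_generateFrom]
    refine MeasurableSpace.generateFrom_le ?_
    rintro _ ⟨_, ⟨r, hr, rfl⟩, rfl⟩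
    have : v ⁻¹' {ω | τ ω ≤ r} = ∅ := by
      ext ω
      simp only [mem_preimage, mem_ofPred_eq, mem_empty_iff_false, iff_false, not_le]
      exact hr.trans_lt ω.2
    rw [this]
    exact @MeasurableSet.empty _ (MeasurableSpace.comap v m)
  obtain ⟨B, hB, hBA⟩ := hle (v ⁻¹' A) ⟨A, hA, rfl⟩
  refine ⟨B, hB, fun ω hω => ?_⟩
  have := Set.ext_iff.1 hBA ⟨ω, hω⟩
  exact this.symm

/-- Under the Cox construction with continuous `Λ`, for every bounded `F`-progressively
measurable `U`, the process `t ↦ U_τ 1_{τ ≤ t} - ∫_0^{t ∧ τ} U_s dΛ_s` is a uniformly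
integrable `G`-martingale. -/
theorem cox_compensated_integral_martingale
    {Ω : Type*} {m0 : MeasurableSpace Ω} (P : Measure Ω) [IsProbabilityMeasure P]
    (F : Filtration ℝ m0)
    (Θ : Ω → ℝ) (hΘ_meas : Measurable Θ)
    (hΘ_law : ∀ x : ℝ, 0 ≤ x → P {ω | x < Θ ω} = ENNReal.ofReal (Real.exp (-x)))
    (hΘ_indep : Indep (MeasurableSpace.comap Θ inferInstance)
      (⨆ (u : ℝ) (_ : (0 : ℝ) ≤ u), (F u : MeasurableSpace Ω)) P)
    (Λ : ℝ → Ω → ℝ)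
    (hΛ_adapted : ∀ t : ℝ, Measurable[F t] (Λ t))
    (hΛ_zero : ∀ ω, ∀ t : ℝ, t ≤ 0 → Λ t ω = 0)
    (hΛ_mono : ∀ ω, Monotone fun t => Λ t ω)
    (hΛ_cont : ∀ ω, Continuous fun t => Λ t ω)
    (hΛ_top : ∀ ω, Tendsto (fun t => Λ t ω) atTop atTop)
    (τ : Ω → ℝ) (hτ : ∀ ω, τ ω = sInf {t : ℝ | 0 ≤ t ∧ Θ ω ≤ Λ t ω})
    (G : ℝ → MeasurableSpace Ω)
    (hG : ∀ t : ℝ, G t = (F t : MeasurableSpace Ω) ⊔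
      MeasurableSpace.generateFrom {A : Set Ω | ∃ s : ℝ, s ≤ t ∧ A = {ω | τ ω ≤ s}})
    (U : ℝ → Ω → ℝ) (hU_prog : ProgMeasurable F U)
    (hU_bdd : ∃ C : ℝ, ∀ (t : ℝ) (ω : Ω), |U t ω| ≤ C)
    (Y : ℝ → Ω → ℝ)
    (hY : ∀ t ω, Y t ω =
      Set.indicator {ω' | τ ω' ≤ t} (fun ω' => U (τ ω') ω') ω
        - ∫ s in Set.Ioc 0 (min t (τ ω)), U s ω
            ∂(lsMeasure (fun r => Λ r ω) (hΛ_mono ω) (hΛ_cont ω))) :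
    (∀ t : ℝ, 0 ≤ t → Measurable[G t] (Y t)) ∧
    (∀ t : ℝ, 0 ≤ t → Integrable (Y t) P) ∧
    (∀ s t : ℝ, 0 ≤ s → s ≤ t → P[Y t | G s] =ᵐ[P] Y s) ∧
    UniformIntegrable Y 1 P := by
  obtain ⟨C, hC⟩ := hU_bdd
  have hU : IsStronglyProgressive F U := hU_prog
  have hgal : ∀ ω x b, genInv (fun r => Λ r ω) x ≤ b ↔ 0 ≤ b ∧ x ≤ Λ b ω := fun ω x b =>
    genInv_le_iff (hΛ_mono ω) (hΛ_cont ω) (hΛ_top ω) x b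
  have hτT : ∀ ω, τ ω = genInv (fun r => Λ r ω) (Θ ω) := hτ
  have hτ0 : ∀ ω, 0 ≤ τ ω := fun ω => (hτT ω).symm ▸ genInv_nonneg _ _
  have hτle : ∀ ω b, τ ω ≤ b ↔ 0 ≤ b ∧ Θ ω ≤ Λ b ω := fun ω b => by rw [hτT, hgal]
  have hΛ0 : ∀ ω t, 0 ≤ Λ t ω := fun ω t => by
    rw [← hΛ_zero ω (min t 0) (min_le_right _ _)]
    exact hΛ_mono ω (min_le_left _ _)
  have hUω : ∀ ω, Measurable fun u => U u ω := fun ω =>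
    measurable_progressive_comp_top hU (fun t => @measurable_const _ _ (F t) _ ω) measurable_id
  -- `H x ω` is the integrand read off the clock `Λ`.
  set H : ℝ → Ω → ℝ := fun x ω => U (genInv (fun r => Λ r ω) x) ω with hH
  have hHω : ∀ ω, Measurable fun x => H x ω := fun ω =>
    (hUω ω).comp (measurable_genInv (hΛ_mono ω) (hΛ_cont ω) (hΛ_top ω))
  have hYH : ∀ t ω, Y t ω = Set.indicator {ω' | τ ω' ≤ t} (fun ω' => U (τ ω') ω') ω
      - ∫ x in Ioc 0 (Λ (min t (τ ω)) ω), H x ω := by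
    intro t ω
    rw [hY, setIntegral_lsMeasure (hΛ_mono ω) (hΛ_cont ω) (hΛ_top ω) (hΛ_zero ω) _ _ (hUω ω)]
  have hΛτ : ∀ ω, Λ (τ ω) ω ≤ |Θ ω| := by
    intro ω
    rw [hτT]
    rcases le_total 0 (Θ ω) with h | h
    · exact (apply_genInv (hΛ_mono ω) (hΛ_cont ω) (hΛ_top ω) (hΛ_zero ω 0 le_rfl) h).le.trans
        (le_abs_self _)
    · rw [genInv_of_nonpos (hΛ_mono ω) (hΛ_cont ω) (hΛ_top ω) (hΛ_zero ω 0 le_rfl) h,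
        hΛ_zero ω 0 le_rfl]
      exact abs_nonneg _
  have hC0 : ∀ ω : Ω, 0 ≤ C := fun ω => (abs_nonneg _).trans (hC 0 ω)
  have hYb : ∀ t ω, |Y t ω| ≤ C + C * |Θ ω| := by
    intro t ω
    rw [hYH]
    refine (abs_sub _ _).trans (add_le_add ?_ ?_)
    · by_cases h : ω ∈ {ω' | τ ω' ≤ t}
      · rw [indicator_of_mem h]
        exact hC _ _
      · rw [indicator_of_notMem h, abs_zero]
        exact hC0 ω
    · refine (abs_running_integral_le _ C (fun x => hC _ _) _).trans
        (mul_le_mul_of_nonneg_left ?_ (hC0 ω))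
      rw [abs_of_nonneg (hΛ0 _ _)]
      exact (hΛ_mono ω (min_le_right _ _)).trans (hΛτ ω)
  have hFG : ∀ t, (F t : MeasurableSpace Ω) ≤ G t := fun t => (hG t).symm ▸ le_sup_left
  have hτG : ∀ s t, s ≤ t → MeasurableSet[G t] {ω | τ ω ≤ s} := by
    intro s t hst
    rw [hG]
    exact (le_sup_right : _ ≤ (F t : MeasurableSpace Ω) ⊔ _) _
      (MeasurableSpace.measurableSet_generateFrom ⟨s, hst, rfl⟩)
  have hGm0 : ∀ t, G t ≤ m0 := by
    intro t
    rw [hG, sup_le_iff]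
    refine ⟨F.le t, MeasurableSpace.generateFrom_le ?_⟩
    rintro _ ⟨s, -, rfl⟩
    simp only [hτle]
    exact (MeasurableSet.const _).inter
      (measurableSet_le hΘ_meas ((hΛ_adapted s).mono (F.le s) le_rfl))
  have hYmeas : ∀ t : ℝ, 0 ≤ t → Measurable[G t] (Y t) := by
    intro t ht
    have hid : @Measurable Ω Ω (G t) (F t) (fun ω => ω) := measurable_id'' (hFG t)
    have hmin := @measurable_min_of_Iic Ω (G t) τ t fun b hb => hτG b t hb
    have h1 := @measurable_progressive_comp Ω Ω m0 (G t) F U hU t (fun ω => ω) hid _ hmin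
      fun ω => min_le_left _ _
    have h2 := @measurable_compensator Ω Ω m0 (G t) F U Λ hΛ_adapted hΛ_mono hΛ_cont hΛ_top hU t ht
      (fun ω => ω) hid _ hmin (fun ω => le_min ht (hτ0 ω)) fun ω => min_le_left _ _
    have h3 : Measurable[G t]
        ({ω | τ ω ≤ t}.indicator fun ω => U (min t (τ ω)) ω) := h1.indicator (hτG t t le_rfl)
    have hYt : Y t = fun ω => {ω | τ ω ≤ t}.indicator (fun ω => U (min t (τ ω)) ω) ω
        - ∫ x in Ioc 0 (Λ (min t (τ ω)) ω), H x ω := by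
      ext ω
      rw [hYH]
      congr 1
      by_cases h : τ ω ≤ t
      · rw [indicator_of_mem (by exact h), indicator_of_mem (by exact h), min_eq_right h]
      · rw [indicator_of_notMem (by exact h), indicator_of_notMem (by exact h)]
    rw [hYt]
    exact h3.sub h2
  have hΘint : Integrable Θ P := by
    have : IsProbabilityMeasure (P.map Θ) := Measure.isProbabilityMeasure_map hΘ_meas.aemeasurable
    refine (integrable_id_expLaw (P.map Θ) fun x hx => ?_).comp_measurable hΘ_meas
    rw [Measure.map_apply hΘ_meas measurableSet_Ioi, ← hΘ_law x hx]
    rfl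
  have hgint : Integrable (fun ω => C + C * |Θ ω|) P :=
    (integrable_const C).add (hΘint.abs.const_mul C)
  have hYsm : ∀ t, AEStronglyMeasurable (Y t) P := by
    intro t
    rcases le_or_gt 0 t with ht | ht
    · exact ((hYmeas t ht).mono (hGm0 t) le_rfl).aestronglyMeasurable
    · have : Y t = fun _ => 0 := by
        ext ω
        rw [hYH, indicator_of_notMem (by simpa using ht.trans_le (hτ0 ω)),
          hΛ_zero ω _ ((min_le_left _ _).trans ht.le)]
        simp
      rw [this]
      exact aestronglyMeasurable_const
  have hYint : ∀ t, Integrable (Y t) P := fun t =>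
    hgint.mono' (hYsm t) (Eventually.of_forall (hYb t))
  refine ⟨hYmeas, fun t _ => hYint t, ?_, uniformIntegrable_of_dominated hgint hYsm hYb⟩
  intro s t hs hst
  have ht : 0 ≤ t := hs.trans hst
  have hΘpos : ∀ᵐ ω ∂P, 0 < Θ ω := by
    refine (prob_compl_eq_zero_iff (measurableSet_lt measurable_const hΘ_meas)).2 ?_
    rw [hΘ_law 0 le_rfl]
    simp
  -- For `Θ > 0`, the process at `t` is a functional of `Θ` and of the path of `Λ`.
  have hYΘ : ∀ ω, 0 < Θ ω → ∀ r, 0 ≤ r → Y r ω = (if Θ ω ≤ Λ r ω then H (Θ ω) ω else 0)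
      - ∫ x in Ioc 0 (min (Λ r ω) (Θ ω)), H x ω := by
    intro ω hω r hr
    rw [hYH, (hΛ_mono ω).map_min]
    congr 1
    · simp only [indicator, mem_ofPred_eq, hτle, hr, true_and, hH, hτT ω]
    · rw [hτT, apply_genInv (hΛ_mono ω) (hΛ_cont ω) (hΛ_top ω) (hΛ_zero ω 0 le_rfl) hω.le]
  refine (ae_eq_condExp_of_forall_setIntegral_eq (hGm0 s) (hYint t)
    (fun _ _ _ => (hYint s).integrableOn) ?_
    (hYmeas s hs).stronglyMeasurable.aestronglyMeasurable).symm
  intro A hA _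
  have hAm0 : MeasurableSet A := hGm0 s _ hA
  rw [hG] at hA
  obtain ⟨B, hB, hAB⟩ := exists_trace_eq _ τ s hA
  set Finf : MeasurableSpace Ω := ⨆ (u : ℝ) (_ : (0 : ℝ) ≤ u), (F u : MeasurableSpace Ω) with hFinf
  have hFle : ∀ u, (F u : MeasurableSpace Ω) ≤ Finf := fun u =>
    (F.mono (le_max_left u 0)).trans
      (le_iSup₂_of_le (f := fun (u : ℝ) (_ : (0 : ℝ) ≤ u) => (F u : MeasurableSpace Ω))
        (max u 0) (le_max_right u 0) le_rfl)
  have hFm0 : Finf ≤ m0 := iSup₂_le fun u _ => F.le u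
  classical
  let k : ℝ × Ω → ℝ := fun p =>
    if (Λ s p.2 < p.1 ∧ p.1 ≤ Λ t p.2) ∧ p.2 ∈ B then H p.1 p.2 else 0
  -- The second factor carries `F_∞`, not the ambient σ-algebra, so that independence applies.
  have hsnd : ∀ u, @Measurable (ℝ × Ω) Ω (@Prod.instMeasurableSpace _ _ _ Finf) (F u)
      (fun p => p.2) := fun u =>
    (@measurable_snd ℝ Ω _ Finf).mono le_rfl (hFle u)
  have hk : @Measurable (ℝ × Ω) ℝ (@Prod.instMeasurableSpace _ _ _ Finf) _ k := by
    let _ : MeasurableSpace (ℝ × Ω) := @Prod.instMeasurableSpace _ _ _ Finf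
    have hfst : Measurable (fun p : ℝ × Ω => p.1) := @measurable_fst ℝ Ω _ Finf
    refine Measurable.ite ?_ (measurable_progressive_comp_top hU hsnd
      (measurable_genInv_comp hΛ_adapted hΛ_mono hΛ_cont hΛ_top hsnd hfst)) measurable_const
    exact ((measurableSet_lt (measurable_adapted_comp hΛ_adapted le_rfl (hsnd s)) hfst).inter
      (measurableSet_le hfst (measurable_adapted_comp hΛ_adapted le_rfl (hsnd t)))).inter
      (hsnd s hB)
  have hkb : ∀ p, |k p| ≤ C := by
    intro p
    simp only [k]
    split_ifs
    · exact hC _ _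
    · simpa using hC0 p.2
  have hind : @IndepFun Ω ℝ Ω m0 _ Finf Θ (fun ω => ω) P := by
    rw [IndepFun_iff_Indep]
    exact (MeasurableSpace.comap_id (m := Finf)).symm ▸ hΘ_indep
  have hzero := @indep_compensator Ω Ω m0 Finf P _ Θ hΘ_meas hΘ_law (fun ω => ω)
    (measurable_id'' hFm0) hind k hk C hkb
  rw [eq_comm, ← sub_eq_zero, ← integral_sub (hYint t).integrableOn (hYint s).integrableOn,
    ← integral_indicator hAm0, ← hzero]
  refine integral_congr_ae ?_
  filter_upwards [hΘpos] with ω hω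
  have hHi : ∀ a b, IntegrableOn (fun x => H x ω) (Ioc a b) := fun a b =>
    Measure.integrableOn_of_bounded (M := C) (by simp) (hHω ω).aestronglyMeasurable
      (Eventually.of_forall fun x => hC _ _)
  have hΛst : Λ s ω ≤ Λ t ω := hΛ_mono ω hst
  rcases le_or_gt (Θ ω) (Λ s ω) with hle | hlt
  -- On `{τ ≤ s}` both sides vanish.
  · have h1 : Y t ω - Y s ω = 0 := by
      rw [hYΘ ω hω t ht, hYΘ ω hω s hs, if_pos hle, if_pos (hle.trans hΛst), min_eq_right hle,
        min_eq_right (hle.trans hΛst), sub_self]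
    have h2 : ∫ x in Ioc 0 (Θ ω), k (x, ω) = 0 := by
      refine setIntegral_eq_zero_of_forall_eq_zero fun x hx => if_neg ?_
      exact fun h => absurd h.1.1 (not_lt.2 (hx.2.trans hle))
    have h3 : k (Θ ω, ω) = 0 := if_neg fun h => absurd h.1.1 (not_lt.2 hle)
    rw [h2, h3, sub_zero]
    simp [indicator, h1]
  · have hsτ : s < τ ω := by
      rw [← not_le, hτle]
      exact fun h => absurd h.2 (not_le.2 hlt)
    by_cases hωB : ω ∈ B
    · rw [indicator_of_mem ((hAB ω hsτ).2 hωB), hYΘ ω hω t ht, hYΘ ω hω s hs,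
        if_neg (not_le.2 hlt), min_eq_left hlt.le]
      have h1 : k (Θ ω, ω) = if Θ ω ≤ Λ t ω then H (Θ ω) ω else 0 := by
        simp [k, hlt, hωB]
      have h2 : ∫ x in Ioc 0 (Θ ω), k (x, ω)
          = ∫ x in Ioc (Λ s ω) (min (Λ t ω) (Θ ω)), H x ω := by
        have : (fun x => k (x, ω)) = (Ioc (Λ s ω) (Λ t ω)).indicator fun x => H x ω := by
          ext x
          simp [k, indicator, hωB]
        rw [this, setIntegral_indicator measurableSet_Ioc, Ioc_inter_Ioc,
          sup_eq_right.2 (hΛ0 ω s), inf_comm]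
      have h3 : ∫ x in Ioc 0 (min (Λ t ω) (Θ ω)), H x ω
          = (∫ x in Ioc 0 (Λ s ω), H x ω)
            + ∫ x in Ioc (Λ s ω) (min (Λ t ω) (Θ ω)), H x ω := by
        rw [← setIntegral_union (Ioc_disjoint_Ioc_of_le le_rfl) measurableSet_Ioc (hHi _ _)
          (hHi _ _), Ioc_union_Ioc_eq_Ioc (hΛ0 ω s) (le_min hΛst hlt.le)]
      rw [h1, h2, h3]
      ring
    · rw [indicator_of_notMem (fun h => hωB ((hAB ω hsτ).1 h))]
      simp [k, hωB]
end
end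

section
/- Under the Cox construction with Λ having continuous paths, the random time τ avoids every F_∞-measurable random time: for every F_∞-measurable random variable σ : Ω → [0,∞], P(τ = σ) = 0. -/
/-!
Off the null event `Θ ≤ 0`, continuity of `Λ` and `Λ_0 = 0` give `Λ_τ = Θ`. Hence on `{σ = τ}` the
variable `Θ` equals `X := Λ_σ`, which is `F_∞`-measurable because a process with continuous paths
is jointly measurable. So `X` is independent of `Θ`; since the exponential law has no atoms, the
product law of `(X, Θ)` gives the diagonal measure zero, i.e. `P(Θ = X) = 0`.
-/

open MeasureTheory ProbabilityTheory Filter Set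
open scoped ENNReal

noncomputable section

/-- The tail formula at `0` says that `Θ` is almost surely positive. -/
lemma measure_nonpos_of_exp_tail {Ω : Type*} {m0 : MeasurableSpace Ω} (P : Measure Ω)
    [IsProbabilityMeasure P] (Θ : Ω → ℝ) (hΘ_meas : Measurable Θ)
    (hΘ_law : ∀ x : ℝ, 0 ≤ x → P {ω | x < Θ ω} = ENNReal.ofReal (Real.exp (-x))) :
    P {ω | Θ ω ≤ 0} = 0 := by
  have h := hΘ_law 0 le_rfl
  simp only [neg_zero, Real.exp_zero, ENNReal.ofReal_one] at h
  have h2 := (prob_compl_eq_zero_iff (μ := P) (measurableSet_lt measurable_const hΘ_meas)).2 h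
  simpa [compl_ofPred, not_lt] using h2

/-- The tail formula on `[0, ∞)` alone forces the law to be atomless: at `a > 0` the mass is at most
`exp (-x) - exp (-a)` for every `0 ≤ x < a`, and `(-∞, 0]` has no mass. -/
lemma measure_eq_zero_of_exp_tail {Ω : Type*} {m0 : MeasurableSpace Ω} (P : Measure Ω)
    [IsProbabilityMeasure P] (Θ : Ω → ℝ) (hΘ_meas : Measurable Θ)
    (hΘ_law : ∀ x : ℝ, 0 ≤ x → P {ω | x < Θ ω} = ENNReal.ofReal (Real.exp (-x))) (a : ℝ) :
    P {ω | Θ ω = a} = 0 := by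
  have hpos : P {ω | Θ ω ≤ 0} = 0 :=
    measure_nonpos_of_exp_tail P Θ hΘ_meas hΘ_law
  rcases le_or_gt a 0 with ha | ha
  · exact measure_mono_null (fun ω (h : Θ ω = a) => (h.trans_le ha : Θ ω ≤ 0)) hpos
  have hbound : ∀ x ∈ Ico 0 a,
      P {ω | Θ ω = a} ≤ ENNReal.ofReal (Real.exp (-x) - Real.exp (-a)) := by
    intro x hx
    have hsub : {ω | a < Θ ω} ⊆ {ω | x < Θ ω} := fun ω (h : a < Θ ω) => hx.2.trans h
    calc P {ω | Θ ω = a} ≤ P ({ω | x < Θ ω} \ {ω | a < Θ ω}) := by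
          refine measure_mono fun ω (h : Θ ω = a) => ⟨?_, ?_⟩
          · change x < Θ ω
            rw [h]; exact hx.2
          · change ¬ a < Θ ω
            rw [h]; exact lt_irrefl a
      _ = P {ω | x < Θ ω} - P {ω | a < Θ ω} :=
          measure_sdiff hsub (measurableSet_lt measurable_const hΘ_meas).nullMeasurableSet
            (measure_ne_top _ _)
      _ = _ := by
          rw [hΘ_law x hx.1, hΘ_law a ha.le, ENNReal.ofReal_sub _ (Real.exp_pos _).le]
  have hlim : Tendsto (fun x : ℝ => ENNReal.ofReal (Real.exp (-x) - Real.exp (-a)))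
      (nhdsWithin a (Iio a)) (nhds 0) := by
    have hc : Continuous fun x : ℝ => ENNReal.ofReal (Real.exp (-x) - Real.exp (-a)) := by
      exact ENNReal.continuous_ofReal.comp (by fun_prop)
    have h := hc.tendsto a
    simp only [sub_self, ENNReal.ofReal_zero] at h
    exact h.mono_left nhdsWithin_le_nhds
  refine le_antisymm (ge_of_tendsto hlim ?_) zero_le
  filter_upwards [Ico_mem_nhdsLT ha] with x hx using hbound x hx

lemma measure_eq_zero_of_indepFun {Ω : Type*} {m0 : MeasurableSpace Ω} (P : Measure Ω)
    [IsProbabilityMeasure P] {X Y : Ω → ℝ} (hX : Measurable X) (hY : Measurable Y)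
    (hind : IndepFun X Y P) (hatom : ∀ a, P {ω | Y ω = a} = 0) :
    P {ω | Y ω = X ω} = 0 := by
  have hD : MeasurableSet {p : ℝ × ℝ | p.2 = p.1} :=
    measurableSet_eq_fun measurable_snd measurable_fst
  have h1 : P {ω | Y ω = X ω} = P.map (fun ω => (X ω, Y ω)) {p : ℝ × ℝ | p.2 = p.1} := by
    rw [Measure.map_apply (hX.prodMk hY) hD]; rfl
  have : IsProbabilityMeasure (P.map Y) := Measure.isProbabilityMeasure_map hY.aemeasurable
  rw [h1, (indepFun_iff_map_prod_eq_prod_map_map hX.aemeasurable hY.aemeasurable).1 hind,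
    Measure.prod_apply hD]
  have h2 : ∀ x, P.map Y (Prod.mk x ⁻¹' {p : ℝ × ℝ | p.2 = p.1}) = 0 := fun x => by
    rw [Measure.map_apply hY (measurable_prodMk_left hD)]
    exact hatom x
  simp only [h2, lintegral_zero]

/-- A continuous path from `0` equals `θ` at its first passage above `θ`: by the intermediate value
theorem it cannot overshoot. For `θ < 0` this fails, since first passage is then at time `0`. -/
lemma apply_sInf_eq {f : ℝ → ℝ} (h0 : f 0 = 0) (hc : Continuous f)
    (ht : Tendsto f atTop atTop) {θ : ℝ} (hθ : 0 < θ) :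
    0 ≤ sInf {t : ℝ | 0 ≤ t ∧ θ ≤ f t} ∧ f (sInf {t : ℝ | 0 ≤ t ∧ θ ≤ f t}) = θ := by
  set S := {t : ℝ | 0 ≤ t ∧ θ ≤ f t} with hS
  have hne : S.Nonempty := ((eventually_ge_atTop 0).and (ht.eventually_ge_atTop θ)).exists
  have hbdd : BddBelow S := ⟨0, fun t h => h.1⟩
  have hcl : IsClosed S :=
    (isClosed_le continuous_const continuous_id).inter (isClosed_le continuous_const hc)
  have hmem : sInf S ∈ S := hcl.csInf_mem hne hbdd
  obtain ⟨hs0, hs1⟩ := hmem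
  refine ⟨hs0, le_antisymm ?_ hs1⟩
  obtain ⟨t, ht1, ht2⟩ := intermediate_value_Icc hs0 hc.continuousOn
    (show θ ∈ Icc (f 0) (f (sInf S)) from ⟨h0.trans_le hθ.le, hs1⟩)
  have : t = sInf S := le_antisymm ht1.2 (csInf_le hbdd ⟨ht1.1, ht2.ge⟩)
  rw [← this, ht2]

/-- Under the Cox construction with continuous `Λ`, the random time `τ` avoids every
`F_∞`-measurable random time `σ : Ω → [0,∞]`, i.e. `P(τ = σ) = 0`. -/
theorem cox_avoidance
    {Ω : Type*} {m0 : MeasurableSpace Ω} (P : Measure Ω) [IsProbabilityMeasure P]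
    (F : Filtration ℝ m0)
    (Θ : Ω → ℝ) (hΘ_meas : Measurable Θ)
    (hΘ_law : ∀ x : ℝ, 0 ≤ x → P {ω | x < Θ ω} = ENNReal.ofReal (Real.exp (-x)))
    (hΘ_indep : Indep (MeasurableSpace.comap Θ inferInstance)
      (⨆ (u : ℝ) (_ : (0 : ℝ) ≤ u), (F u : MeasurableSpace Ω)) P)
    (Λ : ℝ → Ω → ℝ)
    (hΛ_adapted : ∀ t : ℝ, Measurable[F t] (Λ t))
    (hΛ_zero : ∀ ω, ∀ t : ℝ, t ≤ 0 → Λ t ω = 0)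
    (hΛ_mono : ∀ ω, Monotone fun t => Λ t ω)
    (hΛ_cont : ∀ ω, Continuous fun t => Λ t ω)
    (hΛ_top : ∀ ω, Tendsto (fun t => Λ t ω) atTop atTop)
    (τ : Ω → ℝ) (hτ : ∀ ω, τ ω = sInf {t : ℝ | 0 ≤ t ∧ Θ ω ≤ Λ t ω})
    (σ : Ω → ℝ≥0∞)
    (hσ : Measurable[⨆ (u : ℝ) (_ : (0 : ℝ) ≤ u), (F u : MeasurableSpace Ω)] σ) :
    P {ω | σ ω = ENNReal.ofReal (τ ω)} = 0 := by
  set G : MeasurableSpace Ω := ⨆ (u : ℝ) (_ : (0 : ℝ) ≤ u), (F u : MeasurableSpace Ω) with hG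
  have hG_le : G ≤ m0 := iSup₂_le fun u _ => F.le u
  have hΛG : ∀ t, Measurable[G] (Λ t) := fun t =>
    (hΛ_adapted t).mono ((F.mono (le_max_left t 0)).trans
      (le_iSup₂_of_le (max t 0) (le_max_right t 0) le_rfl)) le_rfl
  -- `toReal ∞ = 0` is harmless: `τ` is finite, so `σ = ∞` never meets the event.
  have hX : Measurable[G] fun ω => Λ (σ ω).toReal ω := by
    have hjoint := @measurable_uncurry_of_continuous_of_measurable Ω ℝ ℝ _ _ _ _ _ _ _ _ _ G Λ
      hΛ_cont hΛG
    exact hjoint.comp ((ENNReal.measurable_toReal.comp hσ).prodMk measurable_id)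
  have hind : IndepFun (fun ω => Λ (σ ω).toReal ω) Θ P := by
    rw [IndepFun_iff_Indep]
    exact indep_of_indep_of_le_left hΘ_indep.symm hX.comap_le
  have hatom := measure_eq_zero_of_exp_tail P Θ hΘ_meas hΘ_law
  have hnull := measure_eq_zero_of_indepFun P (hX.mono hG_le le_rfl) hΘ_meas hind hatom
  have hpos : P {ω | Θ ω ≤ 0} = 0 :=
    measure_nonpos_of_exp_tail P Θ hΘ_meas hΘ_law
  refine measure_mono_null (fun ω (h : σ ω = ENNReal.ofReal (τ ω)) => ?_)
    (measure_union_null hpos hnull)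
  rcases le_or_gt (Θ ω) 0 with hω | hω
  · exact Or.inl hω
  · right
    obtain ⟨h1, h2⟩ := apply_sInf_eq (hΛ_zero ω 0 le_rfl) (hΛ_cont ω) (hΛ_top ω) hω
    rw [← hτ ω] at h1 h2
    change Θ ω = Λ (σ ω).toReal ω
    rw [h, ENNReal.toReal_ofReal h1, h2]
end
end

section
/- Let Θ be a random variable with the unit exponential distribution, independent of F_∞ := σ(N_s : s ≥ 0), and let τ := inf{t ≥ 0 : N_t ≥ Θ}. Then almost surely N_τ = N_{τ−} + 1; in particular, τ almost surely coincides with a jump time of the Poisson process N, so that the jump of the indicator process H_t := 1_{τ ≤ t} occurs at a jump of N. -/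
/-!
Three properties hold almost surely: `Θ > 0`, the path of `N` is unbounded, and `N` has no jump of
size at least `2`. On their intersection the claim is deterministic. Unboundedness makes the set
`{t ≥ 0 : Θ ≤ N_t}` nonempty, right-continuity puts its infimum `τ` in it, and `Θ > 0 = N_0` gives
`τ > 0`. The left limit `L = N_{τ-}` is attained by `N` just before `τ`, as `N` is integer-valued,
so `L < Θ ≤ N_τ` and hence `N_τ ≥ L + 1`; a strict inequality would be a jump of size at least `2`.

Unboundedness (`ae_unbounded`) follows from `P(N_n = i) → 0` as `n → ∞` for each fixed `i`.
Absence of double jumps (`ae_no_double_jump`): a jump of size at least `2` in `(0, T]` forces, for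
every `n`, an increment at least `2` over one of the `T n` grid cells of length `1/n`. Each cell has
probability at most `(lam / n) ^ 2` (`prob_two_le`), and the union bound `T lam ^ 2 / n` tends
to `0`.
-/

open MeasureTheory ProbabilityTheory Filter Set
open scoped ENNReal

noncomputable section

/-- The natural filtration of a process `N`: `F_t = σ(N_u : u ≤ t)`. -/
def natFil {Ω : Type*} (N : ℝ → Ω → ℝ) (t : ℝ) : MeasurableSpace Ω :=
  ⨆ (u : ℝ) (_ : u ≤ t), MeasurableSpace.comap (N u) inferInstance

/-- The σ-algebra `F_∞ = σ(N_s : s ≥ 0)` generated by the whole process. -/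
def natFilInf {Ω : Type*} (N : ℝ → Ω → ℝ) : MeasurableSpace Ω :=
  ⨆ (u : ℝ) (_ : (0 : ℝ) ≤ u), MeasurableSpace.comap (N u) inferInstance

/-- The progressive enlargement `G_t = F_t ⊔ σ({τ ≤ s} : s ≤ t)` of the natural
filtration of `N` by the random time `τ`. -/
def progEnl {Ω : Type*} (N : ℝ → Ω → ℝ) (τ : Ω → ℝ) (t : ℝ) : MeasurableSpace Ω :=
  natFil N t ⊔
    MeasurableSpace.generateFrom {A : Set Ω | ∃ s : ℝ, s ≤ t ∧ A = {ω | τ ω ≤ s}}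

/-- `N` is a Poisson process with intensity `lam > 0` (extended by `0` to negative
times): paths are nondecreasing, right-continuous and `ℕ`-valued, and for
`0 ≤ s ≤ t` the increment `N_t - N_s` is independent of `F_s = σ(N_u : u ≤ s)` and
Poisson distributed with parameter `lam * (t - s)`. -/
structure IsPoissonProcess {Ω : Type*} {m0 : MeasurableSpace Ω} (P : MeasureTheory.Measure Ω)
    (N : ℝ → Ω → ℝ) (lam : ℝ) : Prop where
  lam_pos : 0 < lam
  meas : ∀ t : ℝ, Measurable (N t)
  zero : ∀ ω, ∀ t : ℝ, t ≤ 0 → N t ω = 0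
  mono : ∀ ω, Monotone fun t => N t ω
  rightCont : ∀ ω, ∀ t : ℝ, ContinuousWithinAt (fun s => N s ω) (Set.Ici t) t
  natValued : ∀ (t : ℝ) (ω : Ω), ∃ n : ℕ, N t ω = n
  indep : ∀ s t : ℝ, 0 ≤ s → s ≤ t →
    ProbabilityTheory.Indep
      (MeasurableSpace.comap (fun ω => N t ω - N s ω) inferInstance) (natFil N s) P
  law : ∀ s t : ℝ, 0 ≤ s → s ≤ t → ∀ n : ℕ,
    P {ω | N t ω - N s ω = (n : ℝ)} =
      ENNReal.ofReal (Real.exp (-(lam * (t - s))) * (lam * (t - s)) ^ n / (n.factorial : ℝ))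

/-- A Poisson variable with parameter `x` is at least `2` with probability
`1 - e^{-x} (1 + x) ≤ 1 - (1 - x) (1 + x) = x ^ 2`. -/
lemma prob_two_le {Ω : Type*} {m0 : MeasurableSpace Ω} {P : Measure Ω} [IsProbabilityMeasure P]
    {N : ℝ → Ω → ℝ} {lam : ℝ} (hN : IsPoissonProcess P N lam) {s t : ℝ} (hs : 0 ≤ s)
    (hst : s ≤ t) :
    P {ω | 2 ≤ N t ω - N s ω} ≤ ENNReal.ofReal ((lam * (t - s)) ^ 2) := by
  have hm : Measurable fun ω => N t ω - N s ω := (hN.meas t).sub (hN.meas s)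
  have h0 := hN.law s t hs hst 0
  have h1 := hN.law s t hs hst 1
  set x := lam * (t - s) with hx
  have hx0 : 0 ≤ x := mul_nonneg hN.lam_pos.le (by linarith)
  set A : Set Ω := {ω | N t ω - N s ω = ((0 : ℕ) : ℝ)}
  set B : Set Ω := {ω | N t ω - N s ω = ((1 : ℕ) : ℝ)}
  have hA : MeasurableSet A := hm (measurableSet_singleton _)
  have hB : MeasurableSet B := hm (measurableSet_singleton _)
  have hdisj : Disjoint A B := by
    rw [Set.disjoint_left]
    intro ω ha hb
    simp only [A, B, mem_ofPred_eq] at ha hb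
    rw [ha] at hb
    norm_num at hb
  have hU : P (A ∪ B) = ENNReal.ofReal (Real.exp (-x) * (1 + x)) := by
    rw [measure_union hdisj hB, h0, h1, ← ENNReal.ofReal_add (by positivity) (by positivity)]
    congr 1
    simp
    ring
  calc P {ω | 2 ≤ N t ω - N s ω} ≤ P (A ∪ B)ᶜ := by
        apply measure_mono
        intro ω hω
        simp only [A, B, mem_ofPred_eq, mem_compl_iff, mem_union] at hω ⊢
        push_cast
        rintro (h | h) <;> linarith
    _ = 1 - P (A ∪ B) := prob_compl_eq_one_sub (hA.union hB)
    _ = ENNReal.ofReal (1 - Real.exp (-x) * (1 + x)) := by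
        rw [hU, ENNReal.ofReal_sub _ (by positivity), ENNReal.ofReal_one]
    _ ≤ ENNReal.ofReal (x ^ 2) := by
        apply ENNReal.ofReal_le_ofReal
        have := Real.add_one_le_exp (-x)
        nlinarith

lemma ae_unbounded {Ω : Type*} {m0 : MeasurableSpace Ω} {P : Measure Ω} [IsProbabilityMeasure P]
    {N : ℝ → Ω → ℝ} {lam : ℝ} (hN : IsPoissonProcess P N lam) :
    ∀ᵐ ω ∂P, ∀ k : ℕ, ∃ n : ℕ, (k : ℝ) < N n ω := by
  rw [ae_all_iff]
  intro k
  rw [ae_iff]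
  set f : ℕ → ℝ≥0∞ := fun n => ∑ i ∈ Finset.range (k + 1),
    ENNReal.ofReal (Real.exp (-(lam * n)) * (lam * n) ^ i / (i.factorial : ℝ)) with hf
  have hlim : Tendsto f atTop (nhds 0) := by
    have : (0 : ℝ≥0∞) = ∑ i ∈ Finset.range (k + 1), 0 := by simp
    rw [this]
    refine tendsto_finsetSum _ fun i _ => ?_
    rw [← ENNReal.ofReal_zero]
    refine ENNReal.tendsto_ofReal ?_
    have h1 : Tendsto (fun n : ℕ => lam * (n : ℝ)) atTop atTop :=
      tendsto_natCast_atTop_atTop.const_mul_atTop hN.lam_pos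
    have h2 := ((Real.tendsto_pow_mul_exp_neg_atTop_nhds_zero i).comp h1).div_const
      (i.factorial : ℝ)
    rw [zero_div] at h2
    refine h2.congr fun n => ?_
    simp only [Function.comp]
    ring
  refine le_antisymm (ge_of_tendsto' hlim fun n => ?_) zero_le
  calc P {ω | ¬ ∃ n : ℕ, (k : ℝ) < N n ω}
      ≤ P (⋃ i ∈ Finset.range (k + 1), {ω | N n ω - N 0 ω = ((i : ℕ) : ℝ)}) := by
        apply measure_mono
        intro ω hω
        simp only [mem_ofPred_eq, not_exists, not_lt] at hω
        obtain ⟨j, hj⟩ := hN.natValued n ω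
        have hjk := hω n
        rw [hj] at hjk
        simp only [mem_iUnion, Finset.mem_range, mem_ofPred_eq]
        refine ⟨j, ?_, ?_⟩
        · have : j ≤ k := by exact_mod_cast hjk
          omega
        · rw [hj, hN.zero ω 0 le_rfl, sub_zero]
    _ ≤ ∑ i ∈ Finset.range (k + 1), P {ω | N n ω - N 0 ω = ((i : ℕ) : ℝ)} :=
        measure_biUnion_finset_le _ _
    _ = f n := by
        refine Finset.sum_congr rfl fun i _ => ?_
        rw [hN.law 0 n le_rfl (Nat.cast_nonneg n) i, sub_zero]

/-- The path property excludes exactly the jumps of size at least `2`: a time `t > 0` with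
`N_t - N_{t-} ≥ 2` would satisfy `N_t - N_s ≥ 2` for all `s < t`. -/
lemma ae_no_double_jump {Ω : Type*} {m0 : MeasurableSpace Ω} {P : Measure Ω}
    [IsProbabilityMeasure P] {N : ℝ → Ω → ℝ} {lam : ℝ} (hN : IsPoissonProcess P N lam) :
    ∀ᵐ ω ∂P, ∀ T : ℕ, ∀ t : ℝ, 0 < t → t ≤ T → ∃ s < t, N t ω - N s ω < 2 := by
  rw [ae_all_iff]
  intro T
  rw [ae_iff]
  have hlim : Tendsto (fun n : ℕ => ENNReal.ofReal ((T * lam ^ 2) / ((n : ℝ) + 1))) atTop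
      (nhds 0) := by
    rw [← ENNReal.ofReal_zero]
    refine ENNReal.tendsto_ofReal ?_
    have := (tendsto_one_div_add_atTop_nhds_zero_nat (𝕜 := ℝ)).const_mul (T * lam ^ 2)
    rw [mul_zero] at this
    refine this.congr fun n => ?_
    ring
  refine le_antisymm (ge_of_tendsto' hlim fun n => ?_) zero_le
  have hn : (0 : ℝ) < (n : ℝ) + 1 := by positivity
  calc P {ω | ¬ ∀ t : ℝ, 0 < t → t ≤ T → ∃ s < t, N t ω - N s ω < 2}
      ≤ P (⋃ i ∈ Finset.range (T * (n + 1)),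
          {ω | 2 ≤ N (((i : ℝ) + 1) / ((n : ℝ) + 1)) ω - N ((i : ℝ) / ((n : ℝ) + 1)) ω}) := by
        apply measure_mono
        intro ω hω
        simp only [mem_ofPred_eq] at hω
        push Not at hω
        obtain ⟨t, ht0, htT, ht⟩ := hω
        -- The cell `(i / (n + 1), (i + 1) / (n + 1)]` containing `t` has `i + 1 = ⌈t (n + 1)⌉`.
        have hpos : 0 < ⌈t * ((n : ℝ) + 1)⌉₊ := Nat.ceil_pos.2 (by positivity)
        obtain ⟨i, hi⟩ := Nat.exists_eq_succ_of_ne_zero hpos.ne'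
        have hle : t * ((n : ℝ) + 1) ≤ (i : ℝ) + 1 := by
          have := Nat.le_ceil (t * ((n : ℝ) + 1))
          rw [hi] at this
          exact_mod_cast this
        have hlt : (i : ℝ) < t * ((n : ℝ) + 1) := by
          rw [← Nat.lt_ceil, hi]
          exact Nat.lt_succ_self i
        simp only [mem_iUnion, Finset.mem_range, mem_ofPred_eq]
        refine ⟨i, ?_, ?_⟩
        · have : (i : ℝ) < (T : ℝ) * ((n : ℝ) + 1) :=
            hlt.trans_le (mul_le_mul_of_nonneg_right htT hn.le)
          exact_mod_cast this
        · have h1 := ht ((i : ℝ) / ((n : ℝ) + 1)) ((div_lt_iff₀ hn).2 hlt)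
          have h2 : N t ω ≤ N (((i : ℝ) + 1) / ((n : ℝ) + 1)) ω :=
            hN.mono ω ((le_div_iff₀ hn).2 hle)
          linarith
    _ ≤ ∑ i ∈ Finset.range (T * (n + 1)),
          P {ω | 2 ≤ N (((i : ℝ) + 1) / ((n : ℝ) + 1)) ω - N ((i : ℝ) / ((n : ℝ) + 1)) ω} :=
        measure_biUnion_finset_le _ _
    _ ≤ ∑ i ∈ Finset.range (T * (n + 1)), ENNReal.ofReal ((lam / ((n : ℝ) + 1)) ^ 2) := by
        refine Finset.sum_le_sum fun i _ => ?_
        refine (prob_two_le hN (by positivity) (by gcongr; linarith)).trans_eq ?_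
        congr 2
        ring
    _ = ENNReal.ofReal ((T * lam ^ 2) / ((n : ℝ) + 1)) := by
        rw [Finset.sum_const, Finset.card_range, nsmul_eq_mul, ← ENNReal.ofReal_natCast,
          ← ENNReal.ofReal_mul (Nat.cast_nonneg _)]
        congr 1
        push_cast
        field_simp

/-- For `τ = inf {t ≥ 0 : N_t ≥ Θ}` with `Θ` unit exponential independent of `F_∞`,
almost surely `N_τ = N_{τ-} + 1`: the jump of `H_t = 1_{τ ≤ t}` occurs at a jump
of the Poisson process `N`. -/
theorem cox_poisson_jump_at_tau
    {Ω : Type*} {m0 : MeasurableSpace Ω} (P : Measure Ω) [IsProbabilityMeasure P]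
    (N : ℝ → Ω → ℝ) (lam : ℝ) (hN : IsPoissonProcess P N lam)
    (Θ : Ω → ℝ) (hΘ_meas : Measurable Θ)
    (hΘ_law : ∀ x : ℝ, 0 ≤ x → P {ω | x < Θ ω} = ENNReal.ofReal (Real.exp (-x)))
    (hΘ_indep : Indep (MeasurableSpace.comap Θ inferInstance) (natFilInf N) P)
    (τ : Ω → ℝ) (hτ : ∀ ω, τ ω = sInf {t : ℝ | 0 ≤ t ∧ Θ ω ≤ N t ω}) :
    ∀ᵐ ω ∂P, N (τ ω) ω = sSup ((fun s => N s ω) '' Set.Iio (τ ω)) + 1 := by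
  have hΘpos : ∀ᵐ ω ∂P, 0 < Θ ω := by
    have h : P {ω | 0 < Θ ω} = 1 := by simpa using hΘ_law 0 le_rfl
    exact (prob_compl_eq_zero_iff (measurableSet_lt measurable_const hΘ_meas)).2 h
  filter_upwards [hΘpos, ae_unbounded hN, ae_no_double_jump hN] with ω hpos hunb hjump
  set S : Set ℝ := {t : ℝ | 0 ≤ t ∧ Θ ω ≤ N t ω} with hS
  have hne : S.Nonempty := by
    obtain ⟨k, hk⟩ := exists_nat_gt (Θ ω)
    obtain ⟨n, hn⟩ := hunb k
    exact ⟨n, Nat.cast_nonneg n, (hk.trans hn).le⟩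
  have hbdd : BddBelow S := ⟨0, fun t ht => ht.1⟩
  have hτS := hτ ω
  set T := τ ω
  have hT0 : 0 ≤ T := hτS ▸ le_csInf hne fun t ht => ht.1
  have hlt : ∀ s < T, N s ω < Θ ω := by
    intro s hs
    rcases lt_or_ge s 0 with h | h
    · rw [hN.zero ω s h.le]
      exact hpos
    · by_contra! hc
      exact absurd (csInf_le hbdd (show s ∈ S from ⟨h, hc⟩)) (by rw [← hτS]; exact not_le.2 hs)
  have hTΘ : Θ ω ≤ N T ω := by
    have hc : Tendsto (fun s => N s ω) (nhdsWithin T (Ioi T)) (nhds (N T ω)) :=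
      (hN.rightCont ω T).mono_left (nhdsWithin_mono _ Ioi_subset_Ici_self)
    refine ge_of_tendsto hc ?_
    filter_upwards [self_mem_nhdsWithin] with s hs
    obtain ⟨u, hu, hus⟩ := exists_lt_of_csInf_lt hne (show sInf S < s from hτS ▸ hs)
    exact hu.2.trans (hN.mono ω hus.le)
  have hTpos : 0 < T := by
    by_contra! h
    rw [hN.zero ω T h] at hTΘ
    linarith
  obtain ⟨K, hK⟩ := exists_nat_ge T
  obtain ⟨s, hs, hs2⟩ := hjump K T hTpos hK
  obtain ⟨m, hm⟩ := hN.natValued T ω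
  -- Integer values turn `N_s < Θ ≤ N_T` into `N_s + 1 ≤ N_T` for every `s < T`.
  have hstep : ∀ r < T, N r ω + 1 ≤ N T ω := by
    intro r hr
    obtain ⟨j, hj⟩ := hN.natValued r ω
    have h := (hlt r hr).trans_le hTΘ
    rw [hj, hm] at h ⊢
    have h' : j < m := by exact_mod_cast h
    exact_mod_cast h'
  have hs1 : N T ω ≤ N s ω + 1 := by
    obtain ⟨j, hj⟩ := hN.natValued s ω
    rw [hj, hm] at hs2 ⊢
    have h : (m : ℝ) < (j : ℝ) + 2 := by linarith
    have h' : m < j + 2 := by exact_mod_cast h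
    exact_mod_cast (by omega : m ≤ j + 1)
  have hgr : IsGreatest ((fun s => N s ω) '' Iio T) (N T ω - 1) := by
    refine ⟨⟨s, hs, ?_⟩, ?_⟩
    · have := hstep s hs
      simp only
      linarith
    · rintro _ ⟨r, hr, rfl⟩
      have := hstep r hr
      simp only
      linarith
  rw [hgr.csSup_eq]
  ring
end
end

section
/- Let Θ be a random variable with the unit exponential distribution, independent of F_∞ := σ(N_s : s ≥ 0), let τ := inf{t ≥ 0 : N_t ≥ Θ}, and let γ := 1 − e^{−1}. Then the process M^τ_t := 1_{τ ≤ t} − γ λ (t ∧ τ) is a G-martingale: it is G-adapted, each M^τ_t is integrable, and E[M^τ_t | G_s] = M^τ_s almost surely for all 0 ≤ s ≤ t. -/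
/-!
Write `F_t` for `natFil N t`, `G_t` for `progEnl N τ t`, and `γ = 1 - e⁻¹`.

Almost surely `{τ > u} = {N_u < Θ}`, so integrating out the independent threshold `Θ` gives
`P(F ∩ {τ > u}) = E[1_F e^{-N_u}]` for `F ∈ F_∞` (`measure_inter_lt_threshold`). The increment
`N_u - N_s` is Poisson and independent of `F_s`, with `E[e^{-(N_u - N_s)}] = e^{-γ λ (u - s)}`;
hence for `F ∈ F_s` and `u ≥ s`
`P(F ∩ {τ > u}) = P(F ∩ {τ > s}) e^{-γ λ (u - s)}` (`measureReal_lt_randomTime`): from time `s` on,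
`τ` is exponential with rate `γ λ` on `F ∩ {τ > s}`. The layer cake formula then gives
`γ λ E[1_F (t ∧ τ - s ∧ τ)] = P(F ∩ {s < τ ≤ t})` (`integral_min_sub_min`), which says that
`M^τ_t - M^τ_s` has zero integral over every `F ∈ F_s`.

To pass from `F_s` to `G_s`: the difference `M^τ_t - M^τ_s` vanishes on `{τ ≤ s}`, and on
`{τ > s}` every set of `G_s` agrees with a set of `F_s` (`exists_natFil_inter_eq`).
-/

open MeasureTheory ProbabilityTheory Filter Set
open scoped ENNReal

noncomputable section

/-! ### Laplace functional of the Poisson process and the threshold -/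

/-- Expectation of a function of an `ℕ`-valued variable, as a sum over its values. -/
lemma lintegral_comp_of_natValued {Ω : Type*} {m0 : MeasurableSpace Ω} (μ : Measure Ω)
    {X : Ω → ℝ} (hX : Measurable X) (hnat : ∀ ω, ∃ n : ℕ, X ω = n) (g : ℝ → ℝ≥0∞) :
    ∫⁻ ω, g (X ω) ∂μ = ∑' n : ℕ, g n * μ {ω | X ω = n} := by
  have hm : ∀ n : ℕ, MeasurableSet {ω | X ω = (n : ℝ)} := fun n =>
    hX (measurableSet_singleton (n : ℝ))
  have hd : Pairwise (Function.onFun Disjoint fun n : ℕ => {ω | X ω = (n : ℝ)}) := by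
    intro i j hij
    refine Set.disjoint_left.2 fun ω hi hj => hij ?_
    have : (i : ℝ) = j := hi.symm.trans hj
    exact_mod_cast this
  have hU : (⋃ n : ℕ, {ω | X ω = (n : ℝ)}) = univ := by
    ext ω
    simpa using hnat ω
  rw [← setLIntegral_univ, ← hU, lintegral_iUnion hm hd]
  refine tsum_congr fun n => ?_
  rw [setLIntegral_congr_fun (g := fun _ => g n) (hm n), setLIntegral_const]
  intro ω hω
  simp only [mem_ofPred_eq] at hω
  simp [hω]

/-- Laplace transform of the Poisson distribution at `1`, as a sum. -/
lemma tsum_exp_neg_mul_poisson (r : ℝ) (hr : 0 ≤ r) :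
    ∑' n : ℕ, ENNReal.ofReal (Real.exp (-(n : ℝ))) *
      ENNReal.ofReal (Real.exp (-r) * r ^ n / (n.factorial : ℝ)) =
      ENNReal.ofReal (Real.exp (-((1 - Real.exp (-1)) * r))) := by
  have h := (NormedSpace.expSeries_div_hasSum_exp (r * Real.exp (-1))).mul_left (Real.exp (-r))
  rw [← Real.exp_eq_exp_ℝ, ← Real.exp_add] at h
  have h1 : ∀ n : ℕ, ENNReal.ofReal (Real.exp (-(n : ℝ))) *
      ENNReal.ofReal (Real.exp (-r) * r ^ n / (n.factorial : ℝ)) =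
      ENNReal.ofReal (Real.exp (-r) * ((r * Real.exp (-1)) ^ n / (n.factorial : ℝ))) := by
    intro n
    rw [← ENNReal.ofReal_mul (Real.exp_pos _).le, mul_pow, ← Real.exp_nat_mul]
    congr 1
    rw [show (n : ℝ) * -1 = -n by ring]
    ring
  simp_rw [h1]
  rw [← ENNReal.ofReal_tsum_of_nonneg (fun n => by positivity) h.summable, h.tsum_eq]
  congr 2
  ring

section Poisson

variable {Ω : Type*} {m0 : MeasurableSpace Ω} {P : Measure Ω} {N : ℝ → Ω → ℝ} {lam : ℝ}

lemma natFil_le (hN : IsPoissonProcess P N lam) (s : ℝ) : natFil N s ≤ m0 :=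
  iSup₂_le fun u _ => (hN.meas u).comap_le

lemma natFil_le_natFilInf (hN : IsPoissonProcess P N lam) (s : ℝ) :
    natFil N s ≤ natFilInf N := by
  refine iSup₂_le fun u _ => ?_
  rcases le_total 0 u with h | h
  · exact le_iSup₂_of_le (f := fun (u : ℝ) (_ : 0 ≤ u) =>
      MeasurableSpace.comap (N u) inferInstance) u h le_rfl
  · have : N u = N 0 := by
      ext ω
      rw [hN.zero ω u h, hN.zero ω 0 le_rfl]
    rw [this]
    exact le_iSup₂_of_le (f := fun (u : ℝ) (_ : 0 ≤ u) =>
      MeasurableSpace.comap (N u) inferInstance) 0 le_rfl le_rfl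

lemma measurable_natFil {s : ℝ} : Measurable[natFil N s] (N s) :=
  Measurable.of_comap_le (le_iSup₂_of_le (f := fun (u : ℝ) (_ : u ≤ s) =>
      MeasurableSpace.comap (N u) inferInstance) s le_rfl le_rfl)

lemma measurable_natFilInf {s : ℝ} (hs : 0 ≤ s) : Measurable[natFilInf N] (N s) :=
  Measurable.of_comap_le (le_iSup₂_of_le (f := fun (u : ℝ) (_ : 0 ≤ u) =>
      MeasurableSpace.comap (N u) inferInstance) s hs le_rfl)

lemma increment_natValued (hN : IsPoissonProcess P N lam) {s t : ℝ} (hst : s ≤ t) (ω : Ω) :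
    ∃ n : ℕ, N t ω - N s ω = n := by
  obtain ⟨a, ha⟩ := hN.natValued s ω
  obtain ⟨b, hb⟩ := hN.natValued t ω
  have h : N s ω ≤ N t ω := hN.mono ω hst
  rw [ha, hb] at h
  have h' : a ≤ b := by exact_mod_cast h
  exact ⟨b - a, by rw [ha, hb, Nat.cast_sub h']⟩

lemma lintegral_exp_neg_increment (hN : IsPoissonProcess P N lam) {s t : ℝ} (hs : 0 ≤ s)
    (hst : s ≤ t) :
    ∫⁻ ω, ENNReal.ofReal (Real.exp (-(N t ω - N s ω))) ∂P =
      ENNReal.ofReal (Real.exp (-((1 - Real.exp (-1)) * (lam * (t - s))))) := by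
  rw [lintegral_comp_of_natValued P (X := fun ω => N t ω - N s ω)
    ((hN.meas t).sub (hN.meas s)) (increment_natValued hN hst)
    (fun x => ENNReal.ofReal (Real.exp (-x)))]
  simp_rw [hN.law s t hs hst]
  exact tsum_exp_neg_mul_poisson _ (mul_nonneg hN.lam_pos.le (sub_nonneg.2 hst))

/-- `e^{-N_t}` decays, conditionally on `F_s`, by the deterministic factor `e^{-γ λ (t - s)}`. -/
lemma setLIntegral_exp_neg (hN : IsPoissonProcess P N lam) {s t : ℝ} (hs : 0 ≤ s)
    (hst : s ≤ t) {F : Set Ω} (hF : MeasurableSet[natFil N s] F) :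
    ∫⁻ ω in F, ENNReal.ofReal (Real.exp (-(N t ω))) ∂P =
      ENNReal.ofReal (Real.exp (-((1 - Real.exp (-1)) * (lam * (t - s))))) *
        ∫⁻ ω in F, ENNReal.ofReal (Real.exp (-(N s ω))) ∂P := by
  have hF0 : MeasurableSet F := natFil_le hN s F hF
  rw [← lintegral_indicator hF0, ← lintegral_indicator hF0,
    ← lintegral_exp_neg_increment hN hs hst,
    ← lintegral_mul_eq_lintegral_mul_lintegral_of_independent_measurableSpace
      (((hN.meas t).sub (hN.meas s)).comap_le) (natFil_le hN s) (hN.indep s t hs hst)]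
  · refine lintegral_congr fun ω => ?_
    by_cases h : ω ∈ F
    · simp only [h, indicator_of_mem]
      rw [← ENNReal.ofReal_mul (Real.exp_pos _).le, ← Real.exp_add]
      congr 2
      ring
    · simp [h]
  · have h1 : Measurable fun x : ℝ => ENNReal.ofReal (Real.exp (-x)) := by fun_prop
    exact h1.comp (comap_measurable (fun ω => N t ω - N s ω))
  · have h1 : Measurable fun x : ℝ => ENNReal.ofReal (Real.exp (-x)) := by fun_prop
    exact (h1.comp (measurable_natFil (N := N) (s := s))).indicator hF

/-- Integrating out the independent exponential threshold `Θ`. -/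
lemma measure_inter_lt_threshold (hN : IsPoissonProcess P N lam) {Θ : Ω → ℝ}
    (hΘ_law : ∀ x : ℝ, 0 ≤ x → P {ω | x < Θ ω} = ENNReal.ofReal (Real.exp (-x)))
    (hΘ_meas : Measurable Θ)
    (hΘ_indep : Indep (MeasurableSpace.comap Θ inferInstance) (natFilInf N) P)
    {u : ℝ} (hu : 0 ≤ u) {F : Set Ω} (hF : MeasurableSet[natFilInf N] F) :
    P (F ∩ {ω | N u ω < Θ ω}) = ∫⁻ ω in F, ENNReal.ofReal (Real.exp (-(N u ω))) ∂P := by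
  have hm : MeasurableSet {ω | N u ω < Θ ω} := measurableSet_lt (hN.meas u) hΘ_meas
  have hX : ∀ n : ℕ, MeasurableSet {ω | N u ω = (n : ℝ)} := fun n =>
    hN.meas u (measurableSet_singleton (n : ℝ))
  have hle : natFilInf N ≤ m0 := iSup₂_le fun v _ => (hN.meas v).comap_le
  have hF0 : MeasurableSet F := hle F hF
  rw [lintegral_comp_of_natValued _ (hN.meas u) (hN.natValued u)
    (fun x => ENNReal.ofReal (Real.exp (-x)))]
  have h2 := lintegral_comp_of_natValued (P.restrict (F ∩ {ω | N u ω < Θ ω})) (hN.meas u)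
    (hN.natValued u) (fun _ => 1)
  simp only [lintegral_const, Measure.restrict_apply_univ, one_mul] at h2
  rw [h2]
  refine tsum_congr fun n => ?_
  rw [Measure.restrict_apply (hX n), Measure.restrict_apply (hX n),
    ← hΘ_law n n.cast_nonneg]
  have h3 := (Indep_iff _ _ P).1 hΘ_indep {ω | (n : ℝ) < Θ ω} ({ω | N u ω = (n : ℝ)} ∩ F)
    ⟨Ioi (n : ℝ), measurableSet_Ioi, rfl⟩
    ((measurable_natFilInf hu (measurableSet_singleton (n : ℝ))).inter hF)
  rw [← h3]
  congr 1
  ext ω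
  simp only [mem_inter_iff, mem_ofPred_eq]
  constructor
  · rintro ⟨h, h', h''⟩
    exact ⟨h ▸ h'', h, h'⟩
  · rintro ⟨h, h', h''⟩
    exact ⟨h', h'', h' ▸ h⟩

end Poisson

/-! ### The random time and the enlarged filtration -/

section RandomTime

variable {Ω : Type*} {m0 : MeasurableSpace Ω} {P : Measure Ω} {N : ℝ → Ω → ℝ} {lam : ℝ}
  {Θ τ : Ω → ℝ}

/-- On paths that reach the threshold, `{τ > u} = {N_u < Θ}`; right-continuity is what rules out
`τ = u` when `N_u < Θ`. -/
lemma lt_randomTime_iff (hN : IsPoissonProcess P N lam)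
    (hτ : ∀ ω, τ ω = sInf {t : ℝ | 0 ≤ t ∧ Θ ω ≤ N t ω}) {ω : Ω}
    (hne : ∃ t : ℝ, 0 ≤ t ∧ Θ ω ≤ N t ω) {u : ℝ} (hu : 0 ≤ u) :
    u < τ ω ↔ N u ω < Θ ω := by
  have hbdd : BddBelow {t : ℝ | 0 ≤ t ∧ Θ ω ≤ N t ω} := ⟨0, fun t ht => ht.1⟩
  rw [hτ]
  constructor
  · intro h
    by_contra! h'
    exact absurd (csInf_le hbdd (show u ∈ {t : ℝ | 0 ≤ t ∧ Θ ω ≤ N t ω} from ⟨hu, h'⟩))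
      (not_le.2 h)
  · intro h
    have h1 : ∀ᶠ v in nhdsWithin u (Ici u), N v ω < Θ ω :=
      (hN.rightCont ω u).eventually (gt_mem_nhds h)
    obtain ⟨v, hv, hsub⟩ := (mem_nhdsGE_iff_exists_Ico_subset).1 h1
    refine lt_of_lt_of_le (show u < v from hv) (le_csInf hne fun x hx => ?_)
    by_contra! hxv
    rcases le_total u x with hux | hux
    · exact absurd hx.2 (not_le.2 (hsub ⟨hux, hxv⟩))
    · exact absurd (hx.2.trans (hN.mono ω hux)) (not_le.2 h)

lemma randomTime_nonneg (hτ : ∀ ω, τ ω = sInf {t : ℝ | 0 ≤ t ∧ Θ ω ≤ N t ω}) (ω : Ω) :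
    0 ≤ τ ω := by
  rw [hτ]
  exact Real.sInf_nonneg fun x hx => hx.1

/-- `τ` is measurable everywhere; on paths that never reach the threshold it takes the value
`sInf ∅ = 0`. -/
lemma measurable_randomTime (hN : IsPoissonProcess P N lam) (hΘ_meas : Measurable Θ)
    (hτ : ∀ ω, τ ω = sInf {t : ℝ | 0 ≤ t ∧ Θ ω ≤ N t ω}) : Measurable τ := by
  refine measurable_of_Ioi fun u => ?_
  rcases lt_or_ge u 0 with hu | hu
  · have : τ ⁻¹' Ioi u = univ := by
      ext ω
      simpa using hu.trans_le (randomTime_nonneg hτ ω)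
    rw [this]
    exact MeasurableSet.univ
  · have : τ ⁻¹' Ioi u = {ω | N u ω < Θ ω} ∩ ⋃ n : ℕ, {ω | Θ ω ≤ N n ω} := by
      ext ω
      simp only [mem_preimage, mem_Ioi, mem_inter_iff, mem_ofPred_eq, mem_iUnion]
      by_cases hne : ∃ t : ℝ, 0 ≤ t ∧ Θ ω ≤ N t ω
      · rw [lt_randomTime_iff hN hτ hne hu]
        refine ⟨fun h => ⟨h, ?_⟩, fun h => h.1⟩
        obtain ⟨t, -, ht⟩ := hne
        obtain ⟨n, hn⟩ := exists_nat_ge t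
        exact ⟨n, ht.trans (hN.mono ω hn)⟩
      · have h0 : τ ω = 0 := by
          have : {t : ℝ | 0 ≤ t ∧ Θ ω ≤ N t ω} = ∅ := by
            ext t
            simp only [mem_ofPred_eq, mem_empty_iff_false, iff_false]
            exact fun h => hne ⟨t, h⟩
          rw [hτ, this, Real.sInf_empty]
        constructor
        · intro h
          linarith
        · rintro ⟨-, n, hn⟩
          exact absurd ⟨(n : ℝ), n.cast_nonneg, hn⟩ hne
    rw [this]
    exact (measurableSet_lt (hN.meas u) hΘ_meas).inter
      (MeasurableSet.iUnion fun n => measurableSet_le hΘ_meas (hN.meas n))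

/-- Almost every path reaches the threshold, as `P(N_n < Θ) = e^{-γ λ n} → 0`. -/
lemma ae_reaches_threshold [IsProbabilityMeasure P] (hN : IsPoissonProcess P N lam)
    (hΘ_law : ∀ x : ℝ, 0 ≤ x → P {ω | x < Θ ω} = ENNReal.ofReal (Real.exp (-x)))
    (hΘ_meas : Measurable Θ)
    (hΘ_indep : Indep (MeasurableSpace.comap Θ inferInstance) (natFilInf N) P) :
    ∀ᵐ ω ∂P, ∃ t : ℝ, 0 ≤ t ∧ Θ ω ≤ N t ω := by
  have hg : 0 < (1 - Real.exp (-1)) * lam :=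
    mul_pos (by simp) hN.lam_pos
  rw [ae_iff]
  have hle : ∀ n : ℕ, P {ω | ¬ ∃ t : ℝ, 0 ≤ t ∧ Θ ω ≤ N t ω} ≤
      ENNReal.ofReal (Real.exp (-((1 - Real.exp (-1)) * lam * n))) := by
    intro n
    have h1 := measure_inter_lt_threshold hN hΘ_law hΘ_meas hΘ_indep (n.cast_nonneg (α := ℝ))
      (F := univ) MeasurableSet.univ
    rw [setLIntegral_exp_neg hN le_rfl n.cast_nonneg MeasurableSet.univ] at h1
    simp only [univ_inter, hN.zero _ 0 le_rfl, sub_zero, neg_zero, Real.exp_zero,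
      ENNReal.ofReal_one, lintegral_const, Measure.restrict_univ, measure_univ, mul_one] at h1
    rw [mul_assoc, ← h1]
    refine measure_mono fun ω hω => ?_
    by_contra h
    exact hω ⟨n, n.cast_nonneg, not_lt.1 h⟩
  have hlim : Tendsto (fun n : ℕ =>
      ENNReal.ofReal (Real.exp (-((1 - Real.exp (-1)) * lam * n)))) atTop (nhds 0) := by
    rw [← ENNReal.ofReal_zero]
    refine ENNReal.tendsto_ofReal (Real.tendsto_exp_neg_atTop_nhds_zero.comp ?_)
    exact tendsto_natCast_atTop_atTop.const_mul_atTop hg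
  exact le_antisymm (ge_of_tendsto' hlim hle) bot_le

/-- On `F ∈ F_s` the survival function of `τ` after `s` is exponential with rate `γ λ`. -/
lemma measureReal_lt_randomTime [IsProbabilityMeasure P] (hN : IsPoissonProcess P N lam)
    (hΘ_law : ∀ x : ℝ, 0 ≤ x → P {ω | x < Θ ω} = ENNReal.ofReal (Real.exp (-x)))
    (hΘ_meas : Measurable Θ)
    (hΘ_indep : Indep (MeasurableSpace.comap Θ inferInstance) (natFilInf N) P)
    (hτ : ∀ ω, τ ω = sInf {t : ℝ | 0 ≤ t ∧ Θ ω ≤ N t ω})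
    {s : ℝ} (hs : 0 ≤ s) {F : Set Ω} (hF : MeasurableSet[natFil N s] F) {u : ℝ} (hsu : s ≤ u) :
    (P.restrict F).real {ω | u < τ ω} =
      (P.restrict F).real {ω | s < τ ω} *
        Real.exp (-((1 - Real.exp (-1)) * lam * (u - s))) := by
  have key : ∀ v, 0 ≤ v → (P.restrict F) {ω | v < τ ω} =
      ∫⁻ ω in F, ENNReal.ofReal (Real.exp (-(N v ω))) ∂P := by
    intro v hv
    rw [← measure_inter_lt_threshold hN hΘ_law hΘ_meas hΘ_indep hv
      (natFil_le_natFilInf hN s F hF), Measure.restrict_apply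
      (measurableSet_lt measurable_const (measurable_randomTime hN hΘ_meas hτ))]
    refine measure_congr ?_
    filter_upwards [ae_reaches_threshold hN hΘ_law hΘ_meas hΘ_indep] with ω hω
    have := lt_randomTime_iff hN hτ hω hv
    refine propext ?_
    change (v < τ ω ∧ ω ∈ F) ↔ (ω ∈ F ∧ N v ω < Θ ω)
    tauto
  rw [Measure.real, Measure.real, key u (hs.trans hsu), key s hs,
    setLIntegral_exp_neg hN hs hsu hF, ENNReal.toReal_mul,
    ENNReal.toReal_ofReal (Real.exp_pos _).le, mul_comm, mul_assoc]

/-- Before `τ` occurs the enlargement adds no information: every `A ∈ G_s` coincides on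
`{τ > s}` with some `F ∈ F_s`. -/
lemma exists_natFil_inter_eq {s : ℝ} {A : Set Ω} (hA : MeasurableSet[progEnl N τ s] A) :
    ∃ F, MeasurableSet[natFil N s] F ∧ A ∩ {ω | s < τ ω} = F ∩ {ω | s < τ ω} := by
  let m : MeasurableSpace Ω :=
    { MeasurableSet' := fun A => ∃ F, MeasurableSet[natFil N s] F ∧
        A ∩ {ω | s < τ ω} = F ∩ {ω | s < τ ω}
      measurableSet_empty := ⟨∅, @MeasurableSet.empty _ (natFil N s), rfl⟩
      measurableSet_compl := by
        rintro A ⟨F, hF, h⟩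
        refine ⟨Fᶜ, hF.compl, ?_⟩
        ext ω
        have := congrArg (ω ∈ ·) h
        simp only [mem_inter_iff, eq_iff_iff, mem_compl_iff] at this ⊢
        tauto
      measurableSet_iUnion := by
        intro f hf
        choose F hF h using hf
        exact ⟨⋃ i, F i, MeasurableSet.iUnion hF, by
          rw [iUnion_inter, iUnion_inter, iUnion_congr h]⟩ }
  suffices h : progEnl N τ s ≤ m from h A hA
  refine sup_le (fun B hB => ⟨B, hB, rfl⟩) (MeasurableSpace.generateFrom_le ?_)
  rintro B ⟨r, hr, rfl⟩
  refine ⟨∅, @MeasurableSet.empty _ (natFil N s), ?_⟩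
  ext ω
  simp only [mem_inter_iff, mem_ofPred_eq, mem_empty_iff_false, false_and, iff_false, not_and,
    not_lt]
  exact fun h => h.trans hr

lemma measurable_min_progEnl (t : ℝ) : Measurable[progEnl N τ t] fun ω => min t (τ ω) := by
  refine @measurable_of_Iic ℝ Ω _ _ _ (progEnl N τ t) _ _ _ _ fun x => ?_
  rcases lt_or_ge x t with hx | hx
  · have : (fun ω => min t (τ ω)) ⁻¹' Iic x = {ω | τ ω ≤ x} := by
      ext ω
      simp [hx]
    rw [this]
    exact (le_sup_right : _ ≤ progEnl N τ t) _
      (MeasurableSpace.measurableSet_generateFrom ⟨x, hx.le, rfl⟩)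
  · have : (fun ω => min t (τ ω)) ⁻¹' Iic x = univ := by
      ext ω
      simp [hx]
    rw [this]
    exact @MeasurableSet.univ _ (progEnl N τ t)

lemma measurableSet_le_progEnl (t : ℝ) : MeasurableSet[progEnl N τ t] {ω | τ ω ≤ t} :=
  (le_sup_right : _ ≤ progEnl N τ t) _
    (MeasurableSpace.measurableSet_generateFrom ⟨t, le_rfl, rfl⟩)

lemma progEnl_le (hN : IsPoissonProcess P N lam) (hτ_meas : Measurable τ) (s : ℝ) :
    progEnl N τ s ≤ m0 := by
  refine sup_le (natFil_le hN s) (MeasurableSpace.generateFrom_le ?_)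
  rintro B ⟨r, -, rfl⟩
  exact measurableSet_le hτ_meas measurable_const

/-- If, under a finite measure, `τ` has an exponential tail of rate `a` after `s`, then `a` times
the integral of `t ∧ τ - s ∧ τ` is the mass of `{s < τ ≤ t}`. -/
lemma integral_min_sub_min (μ : Measure Ω) [IsFiniteMeasure μ] (hτ_meas : Measurable τ)
    {a s t : ℝ} (hst : s ≤ t)
    (htail : ∀ u, s ≤ u → μ.real {ω | u < τ ω} =
      μ.real {ω | s < τ ω} * Real.exp (-(a * (u - s)))) :
    a * ∫ ω, (min t (τ ω) - min s (τ ω)) ∂μ =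
      μ.real {ω | s < τ ω} - μ.real {ω | t < τ ω} := by
  have hnn : ∀ ω, 0 ≤ min t (τ ω) - min s (τ ω) := fun ω =>
    sub_nonneg.2 (min_le_min_right _ hst)
  have hbd : ∀ ω, min t (τ ω) - min s (τ ω) ≤ t - s := by
    intro ω
    rcases le_total s (τ ω) with h | h
    · rw [min_eq_left h]
      linarith [min_le_left t (τ ω)]
    · rw [min_eq_right h, min_eq_right (h.trans hst)]
      linarith
  have hint : Integrable (fun ω => min t (τ ω) - min s (τ ω)) μ :=
    Integrable.of_bound (by fun_prop) (t - s) (Eventually.of_forall fun ω => by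
      rw [Real.norm_of_nonneg (hnn ω)]
      exact hbd ω)
  -- Layer cake, with the superlevel sets at height `u` being `{τ > s + u}` for `u < t - s`.
  have hset : ∀ u ∈ Ioi (0 : ℝ), μ.real {ω | u < min t (τ ω) - min s (τ ω)} =
      (Iio (t - s)).indicator
        (fun u => μ.real {ω | s < τ ω} * Real.exp (-(a * u))) u := by
    intro u hu
    have hu : 0 < u := hu
    by_cases hut : u < t - s
    · rw [indicator_of_mem (show u ∈ Iio (t - s) from hut)]
      have h := htail (s + u) (by linarith)
      rw [add_sub_cancel_left] at h
      rw [← h]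
      congr 1
      ext ω
      simp only [mem_ofPred_eq]
      constructor
      · intro h
        by_contra! h'
        rcases le_total s (τ ω) with h2 | h2
        · rw [min_eq_left h2] at h
          linarith [min_le_right t (τ ω)]
        · rw [min_eq_right h2, min_eq_right (h2.trans hst)] at h
          linarith
      · intro h
        rw [min_eq_left (show s ≤ τ ω by linarith), lt_sub_iff_add_lt, lt_min_iff]
        constructor <;> linarith
    · rw [indicator_of_notMem (show u ∉ Iio (t - s) from hut)]
      have : {ω | u < min t (τ ω) - min s (τ ω)} = ∅ := by
        ext ω
        simp only [mem_ofPred_eq, mem_empty_iff_false, iff_false, not_lt]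
        linarith [hbd ω, not_lt.1 hut]
      rw [this, measureReal_empty]
  rw [hint.integral_eq_integral_meas_lt (Eventually.of_forall hnn),
    setIntegral_congr_fun measurableSet_Ioi hset, setIntegral_indicator measurableSet_Iio,
    Ioi_inter_Iio, ← integral_Ioc_eq_integral_Ioo,
    ← intervalIntegral.integral_of_le (sub_nonneg.2 hst), ← intervalIntegral.integral_const_mul,
    htail t hst]
  have hderiv : ∀ x ∈ uIcc 0 (t - s),
      HasDerivAt (fun u => -(μ.real {ω | s < τ ω} * Real.exp (-(a * u))))
        (a * (μ.real {ω | s < τ ω} * Real.exp (-(a * x)))) x := by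
    intro x _
    have h := ((((hasDerivAt_id x).const_mul a).neg.exp).const_mul
      (μ.real {ω | s < τ ω})).neg
    refine h.congr_deriv ?_
    simp only [id, Pi.neg_apply]
    ring
  rw [intervalIntegral.integral_eq_sub_of_hasDerivAt hderiv
    ((by fun_prop : Continuous _).intervalIntegrable _ _)]
  simp
  ring

end RandomTime

/-- For `τ = inf {t ≥ 0 : N_t ≥ Θ}` with `Θ` unit exponential independent of `F_∞`
and `γ = 1 - e⁻¹`, the process `M^τ_t = 1_{τ ≤ t} - γ λ (t ∧ τ)` is a `G`-martingale. -/
theorem cox_poisson_compensated_indicator_martingale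
    {Ω : Type*} {m0 : MeasurableSpace Ω} (P : Measure Ω) [IsProbabilityMeasure P]
    (N : ℝ → Ω → ℝ) (lam : ℝ) (hN : IsPoissonProcess P N lam)
    (Θ : Ω → ℝ) (hΘ_meas : Measurable Θ)
    (hΘ_law : ∀ x : ℝ, 0 ≤ x → P {ω | x < Θ ω} = ENNReal.ofReal (Real.exp (-x)))
    (hΘ_indep : Indep (MeasurableSpace.comap Θ inferInstance) (natFilInf N) P)
    (τ : Ω → ℝ) (hτ : ∀ ω, τ ω = sInf {t : ℝ | 0 ≤ t ∧ Θ ω ≤ N t ω})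
    (γ : ℝ) (hγ : γ = 1 - Real.exp (-1))
    (Mτ : ℝ → Ω → ℝ)
    (hMτ : ∀ (t : ℝ) (ω : Ω), Mτ t ω =
      Set.indicator {ω' | τ ω' ≤ t} (fun _ => (1 : ℝ)) ω - γ * lam * min t (τ ω)) :
    (∀ t : ℝ, 0 ≤ t → Measurable[progEnl N τ t] (Mτ t)) ∧
    (∀ t : ℝ, 0 ≤ t → Integrable (Mτ t) P) ∧
    (∀ s t : ℝ, 0 ≤ s → s ≤ t → P[Mτ t | progEnl N τ s] =ᵐ[P] Mτ s) := by
  have hτ_meas : Measurable τ := measurable_randomTime hN hΘ_meas hτ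
  have hMeq : ∀ t, Mτ t = fun ω =>
      Set.indicator {ω' | τ ω' ≤ t} (fun _ => (1 : ℝ)) ω - γ * lam * min t (τ ω) :=
    fun t => funext (hMτ t)
  have hadapted : ∀ t, Measurable[progEnl N τ t] (Mτ t) := by
    intro t
    rw [hMeq]
    exact (Measurable.indicator (@measurable_const _ _ _ (progEnl N τ t) 1)
      (measurableSet_le_progEnl t)).sub
      ((measurable_min_progEnl t).const_mul (γ * lam))
  have hmin_int : ∀ t, 0 ≤ t → Integrable (fun ω => min t (τ ω)) P := by
    intro t ht
    refine Integrable.of_bound (by fun_prop) t (Eventually.of_forall fun ω => ?_)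
    rw [Real.norm_of_nonneg (le_min ht (randomTime_nonneg hτ ω))]
    exact min_le_left _ _
  have hind_int : ∀ t, Integrable (Set.indicator {ω | τ ω ≤ t} (fun _ => (1 : ℝ))) P :=
    fun t => (integrable_const 1).indicator (measurableSet_le hτ_meas measurable_const)
  have hM_int : ∀ t, 0 ≤ t → Integrable (Mτ t) P := by
    intro t ht
    rw [hMeq]
    exact (hind_int t).sub ((hmin_int t ht).const_mul _)
  refine ⟨fun t _ => hadapted t, hM_int, fun s t hs hst => ?_⟩
  have ht : 0 ≤ t := hs.trans hst
  have hle : progEnl N τ s ≤ m0 := progEnl_le hN hτ_meas s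
  have hgt : ∀ u, MeasurableSet {ω | u < τ ω} := fun u =>
    measurableSet_lt measurable_const hτ_meas
  have hD_zero : ∀ ω, ω ∉ {ω | s < τ ω} → Mτ t ω - Mτ s ω = 0 := by
    intro ω hω
    have h : τ ω ≤ s := not_lt.1 hω
    simp [hMτ, h, h.trans hst]
  have hF_zero : ∀ F, MeasurableSet[natFil N s] F → ∫ ω in F, (Mτ t ω - Mτ s ω) ∂P = 0 := by
    intro F hF
    have hD : ∀ ω, Mτ t ω - Mτ s ω =
        ({ω | s < τ ω}.indicator (fun _ => (1 : ℝ)) ω -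
          {ω | t < τ ω}.indicator (fun _ => (1 : ℝ)) ω) -
          γ * lam * (min t (τ ω) - min s (τ ω)) := by
      have hc : ∀ u ω, Set.indicator {ω | τ ω ≤ u} (fun _ => (1 : ℝ)) ω =
          1 - {ω | u < τ ω}.indicator (fun _ => (1 : ℝ)) ω := by
        intro u ω
        by_cases h : τ ω ≤ u
        · simp [h]
        · simp [h, not_le.1 h]
      intro ω
      rw [hMτ, hMτ, hc, hc]
      ring
    have hi : ∀ u, Integrable ({ω | u < τ ω}.indicator (fun _ => (1 : ℝ))) (P.restrict F) :=
      fun u => (integrable_const 1).indicator (hgt u)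
    have hcake := integral_min_sub_min (P.restrict F) hτ_meas hst
      (a := (1 - Real.exp (-1)) * lam) fun u hu =>
        measureReal_lt_randomTime hN hΘ_law hΘ_meas hΘ_indep hτ hs hF hu
    simp_rw [hD]
    have hi_sub : Integrable (fun ω => {ω | s < τ ω}.indicator (fun _ => (1 : ℝ)) ω -
        {ω | t < τ ω}.indicator (fun _ => (1 : ℝ)) ω) (P.restrict F) := (hi s).sub (hi t)
    have hmin_sub : Integrable (fun ω => γ * lam * (min t (τ ω) - min s (τ ω)))
        (P.restrict F) := (((hmin_int t ht).sub (hmin_int s hs)).const_mul _).restrict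
    rw [integral_sub hi_sub hmin_sub,
      integral_sub (hi s) (hi t), integral_const_mul, hγ, hcake,
      integral_indicator (hgt s), integral_indicator (hgt t)]
    simp
  refine (ae_eq_condExp_of_forall_setIntegral_eq hle (hM_int t ht)
    (fun A _ _ => (hM_int s hs).integrableOn) (fun A hA _ => ?_)
    (hadapted s).stronglyMeasurable.aestronglyMeasurable).symm
  obtain ⟨F, hF, hAF⟩ := exists_natFil_inter_eq hA
  have hred : ∀ B, ∫ ω in B, (Mτ t ω - Mτ s ω) ∂P =
      ∫ ω in B ∩ {ω | s < τ ω}, (Mτ t ω - Mτ s ω) ∂P := by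
    intro B
    rw [← setIntegral_indicator (hgt s)]
    congr 1
    ext ω
    by_cases h : ω ∈ {ω | s < τ ω}
    · rw [indicator_of_mem h]
    · rw [indicator_of_notMem h, hD_zero ω h]
  have hA_zero : ∫ ω in A, (Mτ t ω - Mτ s ω) ∂P = 0 := by
    rw [hred A, hAF, ← hred F, hF_zero F hF]
  rw [integral_sub (hM_int t ht).integrableOn (hM_int s hs).integrableOn] at hA_zero
  linarith
end
end
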